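/- Fix γ ∈ (1,2) and Φ_ℓ, Φ_r ∈ ℝ. There exists a weak solution Φ_ss of the stationary fractional Dirichlet problem 𝕃^γ Φ_ss = 0 on [0,1] with boundary values Φ_ss(0) = Φ_ℓ and Φ_ss(1) = Φ_r; any two weak solutions coincide almost everywhere; and the continuous representative of the weak solution satisfies min(Φ_ℓ, Φ_r) ≤ Φ_ss(u) ≤ max(Φ_ℓ, Φ_r) for every u ∈ [0,1]. -/

import Mathlib

open MeasureTheory Filter ENNReal NNReal

noncomputable section

/-- The normalizing constant `c_γ = (∑_{z∈ℤ, z≠0} |z|^{-(1+γ)})⁻¹`. -/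
def cGamma (γ : ℝ) : ℝ := (∑' z : ℤ, if z = 0 then (0:ℝ) else |(z : ℝ)| ^ (-(1 + γ)))⁻¹

/-- The long-range kernel `p(z) = c_γ |z|^{-(1+γ)}` for `z ≠ 0`, `p(0) = 0`. -/
def pker (γ : ℝ) (z : ℝ) : ℝ := if z = 0 then 0 else cGamma γ * |z| ^ (-(1 + γ))

/-- The fractional inner product `⟨F,G⟩_{γ/2}`. -/
def fracInner (γ : ℝ) (F G : ℝ → ℝ) : ℝ :=
  (cGamma γ / 2) * ∫ u in Set.Icc (0:ℝ) 1, ∫ v in Set.Icc (0:ℝ) 1,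
    (F u - F v) * (G u - G v) * |u - v| ^ (-(1 + γ))

/-- The squared fractional seminorm `‖F‖²_{γ/2}`, as an extended real number. -/
def fracSeminormSq (γ : ℝ) (F : ℝ → ℝ) : ℝ≥0∞ :=
  ∫⁻ u in Set.Icc (0:ℝ) 1, ∫⁻ v in Set.Icc (0:ℝ) 1,
    ENNReal.ofReal ((cGamma γ / 2) * (F u - F v) ^ 2 * |u - v| ^ (-(1 + γ)))

/-- The squared `L²` norm on `[0,1]`, as an extended real number. -/
def l2NormSq (F : ℝ → ℝ) : ℝ≥0∞ :=
  ∫⁻ u in Set.Icc (0:ℝ) 1, ENNReal.ofReal ((F u) ^ 2)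

/-- The squared fractional Sobolev norm `‖F‖²_{H^{γ/2}}`. -/
def sobNormSq (γ : ℝ) (F : ℝ → ℝ) : ℝ≥0∞ := l2NormSq F + fracSeminormSq γ F

/-- Membership in the fractional Sobolev space `H^{γ/2}`. -/
def MemHgamma (γ : ℝ) (F : ℝ → ℝ) : Prop := Measurable F ∧ sobNormSq γ F < ⊤

/-- `F` admits a continuous representative on `[0,1]` taking the values `a` at `0` and
`b` at `1`. -/
def HasBoundaryValues (F : ℝ → ℝ) (a b : ℝ) : Prop :=
  ∃ Fc : ℝ → ℝ, ContinuousOn Fc (Set.Icc 0 1) ∧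
    (∀ᵐ u ∂(volume.restrict (Set.Icc (0:ℝ) 1)), F u = Fc u) ∧ Fc 0 = a ∧ Fc 1 = b

/-- The regional fractional Laplacian on `[0,1]`, as a principal-value limit. -/
def HasFracLapAt (γ : ℝ) (F : ℝ → ℝ) (u L : ℝ) : Prop :=
  Tendsto (fun ε : ℝ =>
      cGamma γ * ∫ v in {v : ℝ | v ∈ Set.Icc (0:ℝ) 1 ∧ ε ≤ abs (u - v)},
        (F v - F u) * |v - u| ^ (-(1 + γ)))
    (nhdsWithin (0:ℝ) (Set.Ioi 0)) (nhds L)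

/-- The regional fractional Laplacian `𝕃^γ F(u)` (junk value `0` when the
principal-value limit does not exist). -/
def fracLap (γ : ℝ) (F : ℝ → ℝ) (u : ℝ) : ℝ :=
  open Classical in
  if h : ∃ L, HasFracLapAt γ F u L then h.choose else 0

/-- Smooth real functions with compact support contained in `(0,1)`. -/
def IsSpatialTest (G : ℝ → ℝ) : Prop :=
  ContDiff ℝ (⊤ : ℕ∞) G ∧ ∃ K : Set ℝ, IsCompact K ∧ K ⊆ Set.Ioo 0 1 ∧ Function.support G ⊆ K

/-- Test functions `C¹` in time and `C^∞` in space, with spatial supports contained in a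
fixed compact subset of `(0,1)`. -/
def IsTestCInf (G : ℝ → ℝ → ℝ) : Prop :=
  (∀ u, ContDiff ℝ 1 fun t => G t u) ∧ (∀ t, ContDiff ℝ (⊤ : ℕ∞) fun u => G t u) ∧
  ∃ K : Set ℝ, IsCompact K ∧ K ⊆ Set.Ioo 0 1 ∧ ∀ t, Function.support (G t) ⊆ K

/-- Functions `C¹` in time and `C²` in space, with spatial supports contained in a fixed
compact subset of `(0,1)`. -/
def IsTestC2 (G : ℝ → ℝ → ℝ) : Prop :=
  (∀ u, ContDiff ℝ 1 fun t => G t u) ∧ (∀ t, ContDiff ℝ 2 fun u => G t u) ∧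
  ∃ K : Set ℝ, IsCompact K ∧ K ⊆ Set.Ioo 0 1 ∧ ∀ t, Function.support (G t) ⊆ K

/-- Weak solution of the stationary problem `𝕃^γ Φss = 0` on `[0,1]` with Dirichlet
boundary values `Φl` at `0` and `Φr` at `1`. -/
def IsStationarySolution (γ Φl Φr : ℝ) (Φss : ℝ → ℝ) : Prop :=
  MemHgamma γ Φss ∧ HasBoundaryValues Φss Φl Φr ∧
  ∀ G : ℝ → ℝ, IsSpatialTest G → (∫ u in Set.Icc (0:ℝ) 1, Φss u * fracLap γ G u) = 0

/-!
Let `∇F (u, v) = F u - F v`, an element of `L²(|u - v|^{-(1+γ)} du dv)` on the unit square when `F`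
has finite energy. Symmetrizing the principal value gives `∫ F 𝕃^γ G = -(c_γ / 2) ⟪∇G, ∇F⟫` for test
functions `G`, so a weak solution is a function with the prescribed boundary values whose gradient
is orthogonal to the gradients of test functions. Test functions are dense in the space `H₀` of
finite-energy functions vanishing at `0` and `1`, and the Morrey inequality
`|F u - F v| ≤ C ‖∇F‖`, valid for `γ > 1`, makes `∇ H₀` closed and `∇` injective on `H₀`.
Orthogonal projection of an affine function therefore yields a solution, and by Pythagoras a
solution is the only function of least energy among those with its boundary values. Clamping to the
range of the boundary values does not increase the energy, hence fixes the solution.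
-/

section

open Set Topology

local notation "𝕀" => Set.Icc (0 : ℝ) 1

/-! ### Square-integrable functions -/

section SquareIntegrable

variable {α E : Type*} [MeasurableSpace α] {μ : Measure α}

theorem eLpNorm_two_sq [NormedAddCommGroup E] (f : α → E) (μ : Measure α) :
    eLpNorm f 2 μ ^ 2 = ∫⁻ x, ‖f x‖ₑ ^ 2 ∂μ := by
  have h := eLpNorm_nnreal_pow_eq_lintegral (f := f) (μ := μ) (p := 2) two_ne_zero
  simpa using h

theorem enorm_integral_sq_le_lintegral [NormedAddCommGroup E] [NormedSpace ℝ E]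
    [IsProbabilityMeasure μ] {f : α → E} (hf : AEStronglyMeasurable f μ) :
    ‖∫ x, f x ∂μ‖ₑ ^ 2 ≤ ∫⁻ x, ‖f x‖ₑ ^ 2 ∂μ := by
  rw [← eLpNorm_two_sq]
  gcongr
  calc ‖∫ x, f x ∂μ‖ₑ ≤ ∫⁻ x, ‖f x‖ₑ ∂μ := enorm_integral_le_lintegral_enorm f
    _ = eLpNorm f 1 μ := eLpNorm_one_eq_lintegral_enorm.symm
    _ ≤ eLpNorm f 2 μ := eLpNorm_le_eLpNorm_of_exponent_le one_le_two hf

theorem enorm_add_sq_add_enorm_sub_sq [NormedAddCommGroup E] [InnerProductSpace ℝ E] (x y : E) :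
    ‖x + y‖ₑ ^ 2 + ‖x - y‖ₑ ^ 2 = 2 * (‖x‖ₑ ^ 2 + ‖y‖ₑ ^ 2) := by
  simp only [← ofReal_norm, ← ENNReal.ofReal_pow (norm_nonneg _)]
  rw [← ENNReal.ofReal_add (by positivity) (by positivity),
    ← ENNReal.ofReal_add (by positivity) (by positivity), ← ENNReal.ofReal_ofNat 2,
    ← ENNReal.ofReal_mul zero_le_two, parallelogram_law_with_norm ℝ x y]

theorem eLpNorm_two_add_sq_add_sub_sq [NormedAddCommGroup E] [InnerProductSpace ℝ E]
    {f g : α → E} (hf : AEStronglyMeasurable f μ) (hg : AEStronglyMeasurable g μ) :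
    eLpNorm (f + g) 2 μ ^ 2 + eLpNorm (f - g) 2 μ ^ 2
      = 2 * (eLpNorm f 2 μ ^ 2 + eLpNorm g 2 μ ^ 2) := by
  simp only [eLpNorm_two_sq, Pi.add_apply, Pi.sub_apply]
  have hadd : AEMeasurable (fun x => ‖f x + g x‖ₑ ^ 2) μ := (hf.add hg).enorm.pow_const 2
  rw [← lintegral_add_left' hadd, ← lintegral_add_left' (hf.enorm.pow_const 2),
    ← lintegral_const_mul' _ _ ENNReal.ofNat_ne_top]
  simp only [enorm_add_sq_add_enorm_sub_sq]

/-- Radon–Riesz: the parallelogram law bounds `‖f n - F‖²` by `4‖F‖² - ‖f n + F‖²`, whose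
limsup is at most `0` by Fatou's lemma. -/
theorem tendsto_eLpNorm_two_sub_of_ae_tendsto [NormedAddCommGroup E] [InnerProductSpace ℝ E]
    {f : ℕ → α → E} {F : α → E} (hf : ∀ n, AEStronglyMeasurable (f n) μ) (hF : MemLp F 2 μ)
    (hlim : ∀ᵐ x ∂μ, Tendsto (fun n => f n x) atTop (𝓝 (F x)))
    (hle : ∀ n, eLpNorm (f n) 2 μ ≤ eLpNorm F 2 μ) :
    Tendsto (fun n => eLpNorm (f n - F) 2 μ) atTop (𝓝 0) := by
  set N := 4 * eLpNorm F 2 μ ^ 2 with hN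
  have hN_top : N ≠ ∞ := by finiteness [hF.eLpNorm_ne_top]
  have hsub : ∀ n, eLpNorm (f n - F) 2 μ ^ 2 ≤ N - eLpNorm (f n + F) 2 μ ^ 2 := fun n => by
    have hsum : eLpNorm (f n + F) 2 μ ^ 2 + eLpNorm (f n - F) 2 μ ^ 2 ≤ N := by
      rw [eLpNorm_two_add_sq_add_sub_sq (hf n) hF.1, hN, show (4 : ℝ≥0∞) = 2 * 2 by norm_num,
        mul_assoc, two_mul (eLpNorm F 2 μ ^ 2)]
      gcongr
      exact hle n
    exact ENNReal.le_sub_of_add_le_left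
      (ne_top_of_le_ne_top hN_top (le_self_add.trans hsum)) hsum
  have hfatou : N ≤ liminf (fun n => eLpNorm (f n + F) 2 μ ^ 2) atTop := by
    have hpt : ∀ᵐ x ∂μ, 4 * ‖F x‖ₑ ^ 2 = liminf (fun n => ‖f n x + F x‖ₑ ^ 2) atTop := by
      filter_upwards [hlim] with x hx
      have hsq : Tendsto (fun n => ‖f n x + F x‖ₑ ^ 2) atTop (𝓝 (‖F x + F x‖ₑ ^ 2)) :=
        ((ENNReal.continuous_pow 2).tendsto _).comp (hx.add_const (F x)).enorm
      rw [hsq.liminf_eq, ← two_smul ℝ (F x), enorm_smul, mul_pow]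
      norm_num [Real.enorm_eq_ofReal]
    simp only [hN, eLpNorm_two_sq, Pi.add_apply]
    rw [← lintegral_const_mul' _ _ ENNReal.ofNat_ne_top, lintegral_congr_ae hpt]
    exact lintegral_liminf_le' fun n => ((hf n).add hF.1).enorm.pow_const 2
  have hsq : Tendsto (fun n => eLpNorm (f n - F) 2 μ ^ 2) atTop (𝓝 0) := by
    refine tendsto_of_le_liminf_of_limsup_le zero_le ?_
    calc limsup (fun n => eLpNorm (f n - F) 2 μ ^ 2) atTop
        ≤ limsup (fun n => N - eLpNorm (f n + F) 2 μ ^ 2) atTop :=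
          limsup_le_limsup (Eventually.of_forall hsub)
      _ = N - liminf (fun n => eLpNorm (f n + F) 2 μ ^ 2) atTop :=
          ENNReal.limsup_const_sub _ _ hN_top
      _ = 0 := tsub_eq_zero_of_le hfatou
  have hsqrt := hsq.ennrpow_const ((2 : ℕ) : ℝ)⁻¹
  simpa only [ENNReal.pow_rpow_inv_natCast two_ne_zero,
    ENNReal.zero_rpow_of_pos (show 0 < ((2 : ℕ) : ℝ)⁻¹ by norm_num)] using hsqrt

end SquareIntegrable

/-! ### Real-variable estimates -/

section RealVariable

theorem lipschitzWith_sub_of_monotone {φ : ℝ → ℝ} (hφ : Monotone φ) (hφ' : LipschitzWith 1 φ) :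
    LipschitzWith 1 fun x => x - φ x := by
  refine LipschitzWith.of_le_add fun x y => ?_
  have h := (abs_le.1 (hφ'.dist_le_mul y x)).2
  rw [NNReal.coe_one, one_mul, Real.dist_eq] at h
  rw [Real.dist_eq]
  rcases le_total x y with hxy | hxy
  · rw [abs_of_nonneg (sub_nonneg.2 hxy)] at h
    rw [abs_of_nonpos (sub_nonpos.2 hxy)]
    linarith
  · rw [abs_of_nonneg (sub_nonneg.2 hxy)]
    linarith [hφ hxy]

theorem norm_sub_sub_fderiv_le {E F : Type*} [NormedAddCommGroup E] [NormedSpace ℝ E]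
    [NormedAddCommGroup F] [NormedSpace ℝ F] {f : E → F} {L : ℝ≥0} (hf : Differentiable ℝ f)
    (hL : LipschitzWith L (fderiv ℝ f)) (x y : E) :
    ‖f y - f x - fderiv ℝ f x (y - x)‖ ≤ L * ‖y - x‖ ^ 2 := by
  rw [pow_two, ← mul_assoc]
  refine (convex_segment x y).norm_image_sub_le_of_norm_fderiv_le' (fun z _ => hf z)
    (fun z hz => ?_) (left_mem_segment ℝ x y) (right_mem_segment ℝ x y)
  refine (hL.norm_sub_le z x).trans (mul_le_mul_of_nonneg_left ?_ L.2)
  rw [norm_sub_rev z x, norm_sub_rev y x, ← dist_eq_norm, ← dist_eq_norm]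
  rw [← dist_add_dist_of_mem_segment hz]
  exact le_add_of_nonneg_right dist_nonneg

theorem intervalIntegrable_abs_rpow {r : ℝ} (hr : -1 < r) (a b : ℝ) :
    IntervalIntegrable (fun s : ℝ => |s| ^ r) volume a b := by
  simpa [Complex.norm_cpow_real] using
    (intervalIntegral.intervalIntegrable_cpow' (r := (r : ℂ)) (by simpa using hr)).norm

theorem integrableOn_Icc_abs_sub_rpow {r : ℝ} (hr : -1 < r) (u : ℝ) :
    IntegrableOn (fun v => |v - u| ^ r) (Icc 0 1) := by
  rw [integrableOn_Icc_iff_integrableOn_Ioc,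
    ← intervalIntegrable_iff_integrableOn_Ioc_of_le zero_le_one]
  simpa using (intervalIntegrable_abs_rpow hr (-u) (1 - u)).comp_sub_right u

theorem setIntegral_Icc_abs_sub_rpow_le {r : ℝ} (hr : -1 < r) {u : ℝ} (hu : u ∈ Icc (0 : ℝ) 1) :
    ∫ v in Icc (0 : ℝ) 1, |v - u| ^ r ≤ ∫ s in (-1)..1, |s| ^ r := by
  rw [integral_Icc_eq_integral_Ioc, ← intervalIntegral.integral_of_le zero_le_one,
    intervalIntegral.integral_comp_sub_right fun s => |s| ^ r]
  exact intervalIntegral.integral_mono_interval (by linarith [hu.2]) (by linarith)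
    (by linarith [hu.1]) (Eventually.of_forall fun s => by positivity)
    (intervalIntegrable_abs_rpow hr _ _)

theorem setLIntegral_Icc_comp_sub_le (f : ℝ → ℝ≥0∞) {u : ℝ} (hu : u ∈ Icc (0 : ℝ) 1) :
    ∫⁻ v in Icc (0 : ℝ) 1, f (v - u) ≤ ∫⁻ s in Icc (-1 : ℝ) 1, f s := by
  rw [← (measurePreserving_sub_right volume u).setLIntegral_comp_preimage_emb
    (MeasurableEquiv.subRight u).measurableEmbedding f]
  exact lintegral_mono_set fun v hv => ⟨by linarith [hv.1, hu.2], by linarith [hv.2, hu.1]⟩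

theorem setIntegral_comp_sub_eq_zero_of_odd {f : ℝ → ℝ} (hf : Function.Odd f) {s : Set ℝ} {u : ℝ}
    (hs : ∀ v ∉ s, f (v - u) = 0) : ∫ v in s, f (v - u) = 0 := by
  rw [setIntegral_eq_integral_of_forall_compl_eq_zero hs, integral_sub_right_eq_self f u]
  have h := integral_neg_eq_self f volume
  simp only [hf.eq, integral_neg] at h
  linarith

theorem map_homothety_restrict_le {E : Type*} [NormedAddCommGroup E] [NormedSpace ℝ E]
    [FiniteDimensional ℝ E] [MeasurableSpace E] [BorelSpace E] (μ : Measure E)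
    [μ.IsAddHaarMeasure] {s : Set E} (hs : Convex ℝ s) {x : E} (hx : x ∈ s) {q : ℝ} (hq : 0 < q)
    (hq1 : q ≤ 1) :
    (μ.restrict s).map (AffineMap.homothety x q) ≤
      ENNReal.ofReal (q ^ Module.finrank ℝ E)⁻¹ • μ.restrict s := by
  have hcont : Continuous (AffineMap.homothety x q) := AffineMap.homothety_continuous x q
  refine Measure.le_iff.2 fun t ht => ?_
  rw [Measure.map_apply hcont.measurable ht, Measure.restrict_apply (hcont.measurable ht),
    Measure.smul_apply, Measure.restrict_apply ht, smul_eq_mul]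
  set A := AffineMap.homothety x q ⁻¹' t ∩ s
  have himage : AffineMap.homothety x q '' A ⊆ t ∩ s := by
    rintro _ ⟨y, ⟨hyt, hys⟩, rfl⟩
    refine ⟨hyt, ?_⟩
    rw [AffineMap.homothety_eq_lineMap]
    exact hs.lineMap_mem hx hys ⟨hq.le, hq1⟩
  have hpow : 0 < q ^ Module.finrank ℝ E := by positivity
  calc μ A = ENNReal.ofReal (q ^ Module.finrank ℝ E)⁻¹ *
        (ENNReal.ofReal |q ^ Module.finrank ℝ E| * μ A) := by
        rw [abs_of_pos hpow, ← mul_assoc, ← ENNReal.ofReal_mul (inv_nonneg.2 hpow.le),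
          inv_mul_cancel₀ hpow.ne', ENNReal.ofReal_one, one_mul]
    _ ≤ ENNReal.ofReal (q ^ Module.finrank ℝ E)⁻¹ * μ (t ∩ s) := by
        rw [← Measure.addHaar_image_homothety]
        gcongr

end RealVariable

/-! ### Gagliardo energy -/

section GagliardoEnergy

variable {γ : ℝ} {F G : ℝ → ℝ}

/-- The increments `(u, v) ↦ F u - F v` of `F`, as a linear function of `F`. -/
def increment : (ℝ → ℝ) →ₗ[ℝ] ℝ × ℝ → ℝ :=
  LinearMap.funLeft ℝ ℝ Prod.fst - LinearMap.funLeft ℝ ℝ Prod.snd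

theorem increment_apply (F : ℝ → ℝ) (p : ℝ × ℝ) : increment F p = F p.1 - F p.2 := rfl

/-- The measure `|u - v| ^ (-(1 + γ)) du dv` on the plane, so that the Gagliardo seminorm of `F`
is, up to normalization, the `L²` norm of `increment F`. -/
def gagliardoMeasure (γ : ℝ) : Measure (ℝ × ℝ) :=
  volume.withDensity fun p => ENNReal.ofReal (|p.1 - p.2| ^ (-(1 + γ)))

/-- The restriction of `gagliardoMeasure γ` to the unit square, which measures the regional
energy. -/
def unitGagliardoMeasure (γ : ℝ) : Measure (ℝ × ℝ) :=
  (gagliardoMeasure γ).restrict (𝕀 ×ˢ 𝕀)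

theorem measurable_increment (hF : Measurable F) : Measurable (increment F) :=
  (hF.comp measurable_fst).sub (hF.comp measurable_snd)

theorem continuous_increment (hF : Continuous F) : Continuous (increment F) :=
  (hF.comp continuous_fst).sub (hF.comp continuous_snd)

theorem norm_increment_comp_le {φ : ℝ → ℝ} (hφ : LipschitzWith 1 φ) (F : ℝ → ℝ) (p : ℝ × ℝ) :
    ‖increment (φ ∘ F) p‖ ≤ ‖increment F p‖ := by
  simpa [increment_apply] using hφ.norm_sub_le (F p.1) (F p.2)

theorem setLIntegral_gagliardoMeasure {s : Set (ℝ × ℝ)} (hs : MeasurableSet s)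
    (f : ℝ × ℝ → ℝ≥0∞) : ∫⁻ p in s, f p ∂gagliardoMeasure γ =
      ∫⁻ p in s, ENNReal.ofReal (|p.1 - p.2| ^ (-(1 + γ))) * f p := by
  rw [gagliardoMeasure, restrict_withDensity hs]
  exact lintegral_withDensity_eq_lintegral_mul_non_measurable _ (by fun_prop)
    (Eventually.of_forall fun _ => ENNReal.ofReal_lt_top) f

theorem unitGagliardoMeasure_eq_withDensity (γ : ℝ) : unitGagliardoMeasure γ =
    ((volume.restrict 𝕀).prod (volume.restrict 𝕀)).withDensity
      fun p => ENNReal.ofReal (|p.1 - p.2| ^ (-(1 + γ))) := by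
  rw [unitGagliardoMeasure, gagliardoMeasure,
    restrict_withDensity (measurableSet_Icc.prod measurableSet_Icc), Measure.volume_eq_prod,
    ← Measure.prod_restrict]

theorem lintegral_unitGagliardoMeasure (γ : ℝ) {f : ℝ × ℝ → ℝ≥0∞} (hf : Measurable f) :
    ∫⁻ p, f p ∂unitGagliardoMeasure γ =
      ∫⁻ u in 𝕀, ∫⁻ v in 𝕀, ENNReal.ofReal (|u - v| ^ (-(1 + γ))) * f (u, v) := by
  rw [unitGagliardoMeasure_eq_withDensity,
    lintegral_withDensity_eq_lintegral_mul _ (by fun_prop) hf, lintegral_prod _ (by fun_prop)]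
  rfl

theorem unitGagliardoMeasure_absolutelyContinuous (γ : ℝ) :
    unitGagliardoMeasure γ ≪ (volume.restrict 𝕀).prod (volume.restrict 𝕀) :=
  unitGagliardoMeasure_eq_withDensity γ ▸ withDensity_absolutelyContinuous _ _

theorem increment_ae_eq (h : F =ᵐ[volume.restrict 𝕀] G) :
    increment F =ᵐ[unitGagliardoMeasure γ] increment G := by
  set P : Measure ℝ := volume.restrict 𝕀
  have hfst := (Measure.quasiMeasurePreserving_fst (μ := P) (ν := P)).ae_eq_comp h
  have hsnd := (Measure.quasiMeasurePreserving_snd (μ := P) (ν := P)).ae_eq_comp h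
  exact (unitGagliardoMeasure_absolutelyContinuous γ).ae_eq (hfst.sub hsnd)

/-- The functions on `[0,1]` of finite Gagliardo energy; those in `L²` form `H^{γ/2}`. -/
def energySpace (γ : ℝ) : Submodule ℝ (ℝ → ℝ) where
  carrier := {F | MemLp (increment F) 2 (unitGagliardoMeasure γ)}
  add_mem' hF hG := by simpa using hF.add hG
  zero_mem' := by simp
  smul_mem' c F hF := by simpa using hF.const_smul c

/-- The increments of a function of finite energy as an element of `L²`; the inner product of two
such elements is the bilinear form `⟨F, G⟩_{γ/2}` without its factor `c_γ / 2`. -/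
def nonlocalGrad (γ : ℝ) : energySpace γ →ₗ[ℝ] Lp ℝ 2 (unitGagliardoMeasure γ) where
  toFun F := MemLp.toLp (increment F) F.2
  map_add' F G := by
    rw [← MemLp.toLp_add F.2 G.2]
    exact MemLp.toLp_congr _ _ (by simp)
  map_smul' c F := by
    rw [RingHom.id_apply, ← MemLp.toLp_const_smul c F.2]
    exact MemLp.toLp_congr _ _ (by simp)

theorem mem_energySpace_iff :
    F ∈ energySpace γ ↔ MemLp (increment F) 2 (unitGagliardoMeasure γ) := Iff.rfl

theorem coeFn_nonlocalGrad (F : energySpace γ) :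
    nonlocalGrad γ F =ᵐ[unitGagliardoMeasure γ] increment F := MemLp.coeFn_toLp F.2

theorem energySpace_congr (h : F =ᵐ[volume.restrict 𝕀] G) :
    F ∈ energySpace γ ↔ G ∈ energySpace γ := memLp_congr_ae (increment_ae_eq h)

theorem nonlocalGrad_congr (hF : F ∈ energySpace γ) (hG : G ∈ energySpace γ)
    (h : F =ᵐ[volume.restrict 𝕀] G) : nonlocalGrad γ ⟨F, hF⟩ = nonlocalGrad γ ⟨G, hG⟩ :=
  MemLp.toLp_congr hF hG (increment_ae_eq h)

theorem comp_mem_energySpace {φ : ℝ → ℝ} (hφ : LipschitzWith 1 φ) (hm : Measurable F)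
    (hF : F ∈ energySpace γ) : φ ∘ F ∈ energySpace γ := by
  have hmeas : Measurable (increment (φ ∘ F)) :=
    measurable_increment (hφ.continuous.measurable.comp hm)
  rw [mem_energySpace_iff] at hF ⊢
  exact hF.of_le hmeas.aestronglyMeasurable (Eventually.of_forall (norm_increment_comp_le hφ F))

theorem norm_nonlocalGrad_comp_le {φ : ℝ → ℝ} (hφ : LipschitzWith 1 φ) (hF : F ∈ energySpace γ)
    (hφF : φ ∘ F ∈ energySpace γ) :
    ‖nonlocalGrad γ ⟨φ ∘ F, hφF⟩‖ ≤ ‖nonlocalGrad γ ⟨F, hF⟩‖ := by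
  refine Lp.norm_le_norm_of_ae_le ?_
  filter_upwards [coeFn_nonlocalGrad ⟨φ ∘ F, hφF⟩, coeFn_nonlocalGrad ⟨F, hF⟩] with p h₁ h₂
  rw [h₁, h₂]
  exact norm_increment_comp_le hφ F p

theorem enorm_nonlocalGrad_sq (F : energySpace γ) :
    ‖nonlocalGrad γ F‖ₑ ^ 2 = ∫⁻ p, ‖increment F p‖ₑ ^ 2 ∂unitGagliardoMeasure γ := by
  rw [Lp.enorm_def, eLpNorm_congr_ae (coeFn_nonlocalGrad F), eLpNorm_two_sq]

theorem lintegral_abs_sub_rpow_ne_top {r : ℝ} (hr : -1 < r) :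
    ∫⁻ u in 𝕀, ∫⁻ v in 𝕀, ENNReal.ofReal (|u - v| ^ r) ≠ ∞ := by
  have hint : IntegrableOn (fun s : ℝ => |s| ^ r) (Icc (-1) 1) := by
    rw [integrableOn_Icc_iff_integrableOn_Ioc,
      ← intervalIntegrable_iff_integrableOn_Ioc_of_le (by simp)]
    exact intervalIntegrable_abs_rpow hr _ _
  have hbound : ∀ u ∈ 𝕀, ∫⁻ v in 𝕀, ENNReal.ofReal (|u - v| ^ r) ≤
      ∫⁻ s in Icc (-1) 1, ENNReal.ofReal (|s| ^ r) := fun u hu => by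
    simpa only [abs_sub_comm u] using
      setLIntegral_Icc_comp_sub_le (fun s => ENNReal.ofReal (|s| ^ r)) hu
  refine ne_top_of_le_ne_top ?_ (setLIntegral_mono' measurableSet_Icc hbound)
  simpa using (hint.lintegral_lt_top).ne

theorem rpow_mul_enorm_increment_sq_le {L : ℝ≥0} (hL : LipschitzWith L F) (u v : ℝ) :
    ENNReal.ofReal (|u - v| ^ (-(1 + γ))) * ‖increment F (u, v)‖ₑ ^ 2 ≤
      (L : ℝ≥0∞) ^ 2 * ENNReal.ofReal (|u - v| ^ (1 - γ)) := by
  rcases eq_or_ne u v with rfl | huv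
  · simp [increment_apply]
  have hpos : 0 < |u - v| := abs_pos.2 (sub_ne_zero.2 huv)
  have hrpow : |u - v| ^ (1 - γ) = |u - v| ^ (-(1 + γ)) * |u - v| ^ 2 := by
    rw [← Real.rpow_natCast, ← Real.rpow_add hpos]
    norm_num
    ring_nf
  have hinc : ‖increment F (u, v)‖ₑ ≤ L * ENNReal.ofReal |u - v| := by
    rw [increment_apply, ← edist_eq_enorm_sub, ← Real.dist_eq, ← edist_dist]
    exact hL u v
  calc ENNReal.ofReal (|u - v| ^ (-(1 + γ))) * ‖increment F (u, v)‖ₑ ^ 2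
      ≤ ENNReal.ofReal (|u - v| ^ (-(1 + γ))) * (L * ENNReal.ofReal |u - v|) ^ 2 := by gcongr
    _ = (L : ℝ≥0∞) ^ 2 * ENNReal.ofReal (|u - v| ^ (1 - γ)) := by
        rw [hrpow, ENNReal.ofReal_mul (by positivity), ENNReal.ofReal_pow hpos.le]
        ring

theorem mem_energySpace_of_lipschitzWith (hγ : γ < 2) {L : ℝ≥0} (hL : LipschitzWith L F) :
    F ∈ energySpace γ := by
  have hm := measurable_increment hL.continuous.measurable
  suffices h : eLpNorm (increment F) 2 (unitGagliardoMeasure γ) ^ 2 < ∞ from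
    mem_energySpace_iff.2 ⟨hm.aestronglyMeasurable, by simpa using h⟩
  rw [eLpNorm_two_sq, lintegral_unitGagliardoMeasure γ (by fun_prop)]
  calc ∫⁻ u in 𝕀, ∫⁻ v in 𝕀, ENNReal.ofReal (|u - v| ^ (-(1 + γ))) * ‖increment F (u, v)‖ₑ ^ 2
      ≤ ∫⁻ u in 𝕀, ∫⁻ v in 𝕀, (L : ℝ≥0∞) ^ 2 * ENNReal.ofReal (|u - v| ^ (1 - γ)) :=
        lintegral_mono fun u => lintegral_mono fun v => rpow_mul_enorm_increment_sq_le hL u v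
    _ = (L : ℝ≥0∞) ^ 2 * ∫⁻ u in 𝕀, ∫⁻ v in 𝕀, ENNReal.ofReal (|u - v| ^ (1 - γ)) := by
        simp_rw [lintegral_const_mul' _ _ (ENNReal.pow_ne_top ENNReal.coe_ne_top)]
    _ < ∞ := ENNReal.mul_lt_top (ENNReal.pow_lt_top ENNReal.coe_lt_top)
        (lintegral_abs_sub_rpow_ne_top (by linarith)).lt_top

theorem cGamma_pos (hγ : 0 < γ) : 0 < cGamma γ := by
  have hnonneg : ∀ z : ℤ, 0 ≤ if z = 0 then (0 : ℝ) else |(z : ℝ)| ^ (-(1 + γ)) := fun z => by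
    split_ifs <;> positivity
  have hle : ∀ z : ℤ, (if z = 0 then (0 : ℝ) else |(z : ℝ)| ^ (-(1 + γ))) ≤
      |(z : ℝ)| ^ (-(1 + γ)) := fun z => by
    split_ifs
    exacts [by positivity, le_rfl]
  have hsum := (Real.summable_abs_int_rpow (b := 1 + γ) (by linarith)).of_nonneg_of_le hnonneg hle
  exact inv_pos.2 (hsum.tsum_pos hnonneg 1 (by simp))

theorem fracSeminormSq_eq (hγ : 0 < γ) (hF : Measurable F) :
    fracSeminormSq γ F = ENNReal.ofReal (cGamma γ / 2) *
      eLpNorm (increment F) 2 (unitGagliardoMeasure γ) ^ 2 := by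
  have hm := measurable_increment hF
  have hc := (cGamma_pos hγ).le
  rw [eLpNorm_two_sq, lintegral_unitGagliardoMeasure γ (by fun_prop), fracSeminormSq,
    ← lintegral_const_mul' _ _ ENNReal.ofReal_ne_top]
  refine lintegral_congr fun u => ?_
  rw [← lintegral_const_mul' _ _ ENNReal.ofReal_ne_top]
  refine lintegral_congr fun v => ?_
  rw [increment_apply, Real.enorm_eq_ofReal_abs, ← ENNReal.ofReal_pow (abs_nonneg _), sq_abs,
    ← ENNReal.ofReal_mul (by positivity), ← ENNReal.ofReal_mul (by positivity)]
  ring_nf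

theorem l2NormSq_eq (F : ℝ → ℝ) : l2NormSq F = eLpNorm F 2 (volume.restrict 𝕀) ^ 2 := by
  simp only [eLpNorm_two_sq, l2NormSq, Real.enorm_eq_ofReal_abs,
    ← ENNReal.ofReal_pow (abs_nonneg _), sq_abs]

theorem memHgamma_iff (hγ : 0 < γ) : MemHgamma γ F ↔
    Measurable F ∧ MemLp F 2 (volume.restrict 𝕀) ∧ F ∈ energySpace γ := by
  have hc : ENNReal.ofReal (cGamma γ / 2) ≠ 0 := by simpa using cGamma_pos hγ
  refine and_congr_right fun hF => ?_
  rw [sobNormSq, ENNReal.add_lt_top, l2NormSq_eq, fracSeminormSq_eq hγ hF, mem_energySpace_iff,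
    MemLp, MemLp, and_iff_right hF.aestronglyMeasurable,
    and_iff_right (measurable_increment hF).aestronglyMeasurable]
  simp only [ENNReal.pow_lt_top_iff, OfNat.ofNat_ne_zero, or_false, ENNReal.mul_lt_top_iff, hc,
    ENNReal.ofReal_lt_top, true_and, false_or, pow_eq_zero_iff, ne_eq, not_false_eq_true]
  exact and_congr_right fun _ => ⟨fun h => h.elim id fun h => by simp [h], Or.inl⟩

end GagliardoEnergy

/-! ### Morrey's inequality -/

section Morrey

variable {γ : ℝ} {F : ℝ → ℝ}

theorem setLIntegral_enorm_increment_sq_le (hγ : -1 < γ) (R : ℝ) (F : ℝ → ℝ) :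
    ∫⁻ p in {p : ℝ × ℝ | |p.1 - p.2| ≤ R} ∩ 𝕀 ×ˢ 𝕀, ‖increment F p‖ₑ ^ 2 ≤
      ENNReal.ofReal (R ^ (1 + γ)) * ∫⁻ p, ‖increment F p‖ₑ ^ 2 ∂unitGagliardoMeasure γ := by
  have hsq : MeasurableSet (𝕀 ×ˢ 𝕀) := measurableSet_Icc.prod measurableSet_Icc
  have hnear : MeasurableSet {p : ℝ × ℝ | |p.1 - p.2| ≤ R} :=
    measurableSet_le (by fun_prop) measurable_const
  rw [unitGagliardoMeasure, setLIntegral_gagliardoMeasure hsq,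
    ← lintegral_const_mul' _ _ ENNReal.ofReal_ne_top]
  refine (setLIntegral_mono' (hnear.inter hsq) fun p hp => ?_).trans
    (lintegral_mono_set inter_subset_right)
  rcases eq_or_ne p.1 p.2 with hdiag | hdiag
  · simp [increment_apply, hdiag]
  have hpos : 0 < |p.1 - p.2| := abs_pos.2 (sub_ne_zero.2 hdiag)
  rw [← mul_assoc, ← ENNReal.ofReal_mul (Real.rpow_nonneg (hpos.le.trans hp.1) _)]
  refine le_mul_of_one_le_left' (ENNReal.one_le_ofReal.2 ?_)
  rw [Real.rpow_neg hpos.le, ← div_eq_mul_inv, one_le_div (by positivity)]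
  exact Real.rpow_le_rpow hpos.le hp.1 (by linarith)

theorem abs_homothety_sub_homothety_le {x s t q r : ℝ} (hx : x ∈ 𝕀) (hs : s ∈ 𝕀) (ht : t ∈ 𝕀)
    (hq : 0 ≤ q) (hr : 0 ≤ r) :
    |AffineMap.homothety x q s - AffineMap.homothety x r t| ≤ q + r := by
  have hxs := Real.dist_le_of_mem_Icc_01 hs hx
  have hxt := Real.dist_le_of_mem_Icc_01 ht hx
  rw [Real.dist_eq] at hxs hxt
  calc |AffineMap.homothety x q s - AffineMap.homothety x r t|
      = |q * (s - x) - r * (t - x)| := by simp [AffineMap.homothety_apply]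
    _ ≤ |q * (s - x)| + |r * (t - x)| := abs_sub _ _
    _ = q * |s - x| + r * |t - x| := by rw [abs_mul, abs_mul, abs_of_nonneg hq, abs_of_nonneg hr]
    _ ≤ q * 1 + r * 1 := by gcongr
    _ = q + r := by ring

theorem homothety_mem_Icc {x q t : ℝ} (hx : x ∈ 𝕀) (hq : q ∈ 𝕀) (ht : t ∈ 𝕀) :
    AffineMap.homothety x q t ∈ 𝕀 := by
  rw [AffineMap.homothety_eq_lineMap]
  exact (convex_Icc 0 1).lineMap_mem hx ht hq

/-- The average of `F` over the image of `[0,1]` under the homothety of center `x` and ratio `q`;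
it interpolates between the average of `F` on `[0,1]` and the value `F x`. -/
def homothetyAverage (F : ℝ → ℝ) (x q : ℝ) : ℝ := ∫ t in 𝕀, F (AffineMap.homothety x q t)

theorem homothetyAverage_sub_homothetyAverage (hF : Continuous F) (x q r : ℝ) :
    homothetyAverage F x q - homothetyAverage F x r =
      ∫ p, increment F (Prod.map (AffineMap.homothety x q) (AffineMap.homothety x r) p)
        ∂(volume.restrict 𝕀).prod (volume.restrict 𝕀) := by
  have hcont : ∀ q : ℝ, Continuous fun t => F (AffineMap.homothety x q t) := fun q =>
    hF.comp (AffineMap.homothety_continuous x q)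
  have hint : ∀ q : ℝ, Integrable (fun t => F (AffineMap.homothety x q t)) (volume.restrict 𝕀) :=
    fun q => (hcont q).continuousOn.integrableOn_compact isCompact_Icc
  simp only [increment_apply, Prod.map_fst, Prod.map_snd]
  rw [integral_sub ((hint q).comp_fst _) ((hint r).comp_snd _),
    integral_fun_fst (fun t => F (AffineMap.homothety x q t)),
    integral_fun_snd (fun t => F (AffineMap.homothety x r t))]
  simp [homothetyAverage]

theorem enorm_homothetyAverage_sub_sq_le (hγ : -1 < γ) (hF : Continuous F) {x q r : ℝ}
    (hx : x ∈ 𝕀) (hq : 0 < q) (hq1 : q ≤ 1) (hr : 0 < r) (hr1 : r ≤ 1) :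
    ‖homothetyAverage F x q - homothetyAverage F x r‖ₑ ^ 2 ≤
      ENNReal.ofReal ((q * r)⁻¹ * (q + r) ^ (1 + γ)) *
        ∫⁻ p, ‖increment F p‖ₑ ^ 2 ∂unitGagliardoMeasure γ := by
  set P : Measure ℝ := volume.restrict 𝕀 with hP
  have : IsProbabilityMeasure P := ⟨by simp [hP]⟩
  set T : ℝ × ℝ → ℝ × ℝ := Prod.map (AffineMap.homothety x q) (AffineMap.homothety x r)
  set N : Set (ℝ × ℝ) := {p | |p.1 - p.2| ≤ q + r}
  have hN : MeasurableSet N := measurableSet_le (by fun_prop) measurable_const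
  have hTcont : Continuous T :=
    (AffineMap.homothety_continuous x q).prodMap (AffineMap.homothety_continuous x r)
  have hcont := continuous_increment hF
  have hTN : ∀ᵐ p ∂P.prod P, T p ∈ N := by
    rw [hP, Measure.prod_restrict]
    filter_upwards [ae_restrict_mem (measurableSet_Icc.prod measurableSet_Icc)] with p hp
    exact abs_homothety_sub_homothety_le hx hp.1 hp.2 hq.le hr.le
  have hmap : (P.prod P).map T ≤ ENNReal.ofReal (q * r)⁻¹ • P.prod P := by
    have h := Measure.prod_mono (map_homothety_restrict_le volume (convex_Icc 0 1) hx hq hq1)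
      (map_homothety_restrict_le volume (convex_Icc 0 1) hx hr hr1)
    rw [Measure.map_prod_map _ _ (AffineMap.homothety_continuous x q).measurable
      (AffineMap.homothety_continuous x r).measurable, Measure.prod_smul_left,
      Measure.prod_smul_right, smul_smul, ← ENNReal.ofReal_mul (by positivity), ← mul_inv] at h
    simpa using h
  calc ‖homothetyAverage F x q - homothetyAverage F x r‖ₑ ^ 2
      ≤ ∫⁻ p, ‖increment F (T p)‖ₑ ^ 2 ∂P.prod P := by
        rw [homothetyAverage_sub_homothetyAverage hF]
        exact enorm_integral_sq_le_lintegral (hcont.comp hTcont).aestronglyMeasurable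
    _ = ∫⁻ p, N.indicator (fun p => ‖increment F p‖ₑ ^ 2) (T p) ∂P.prod P :=
        lintegral_congr_ae <| hTN.mono fun p hp =>
          (indicator_of_mem hp fun p => ‖increment F p‖ₑ ^ 2).symm
    _ = ∫⁻ p, N.indicator (fun p => ‖increment F p‖ₑ ^ 2) p ∂(P.prod P).map T :=
        (lintegral_map (by fun_prop) hTcont.measurable).symm
    _ ≤ ENNReal.ofReal (q * r)⁻¹ * ∫⁻ p in N ∩ 𝕀 ×ˢ 𝕀, ‖increment F p‖ₑ ^ 2 := by
        refine (lintegral_mono' hmap le_rfl).trans_eq ?_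
        rw [lintegral_smul_measure, lintegral_indicator hN, hP, Measure.prod_restrict,
          Measure.restrict_restrict hN, ← Measure.volume_eq_prod, smul_eq_mul]
    _ ≤ _ := by
        rw [ENNReal.ofReal_mul (by positivity), mul_assoc]
        gcongr
        exact setLIntegral_enorm_increment_sq_le hγ (q + r) F

theorem abs_homothetyAverage_sub_le (hγ : -1 < γ) (F : energySpace γ) (hF : Continuous (F : ℝ → ℝ))
    {x q : ℝ} (hx : x ∈ 𝕀) (hq : 0 < q) (hq1 : q ≤ 1) :
    |homothetyAverage F x q - homothetyAverage F x (q / 2)| ≤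
      √(2 * (3 / 2) ^ (1 + γ)) * ‖nonlocalGrad γ F‖ * q ^ ((γ - 1) / 2) := by
  have hconst : (q * (q / 2))⁻¹ * (q + q / 2) ^ (1 + γ) =
      2 * (3 / 2) ^ (1 + γ) * (q ^ ((γ - 1) / 2)) ^ 2 := by
    rw [show q + q / 2 = 3 / 2 * q by ring, Real.mul_rpow (by norm_num) hq.le,
      ← Real.rpow_natCast, ← Real.rpow_mul hq.le,
      show 1 + γ = (γ - 1) / 2 * (2 : ℕ) + (2 : ℕ) by push_cast; ring, Real.rpow_add_natCast hq.ne']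
    field_simp
  have h := enorm_homothetyAverage_sub_sq_le hγ hF hx hq hq1 (half_pos hq) (by linarith)
  rw [← enorm_nonlocalGrad_sq, Real.enorm_eq_ofReal_abs, ← ofReal_norm,
    ← ENNReal.ofReal_pow (abs_nonneg _), ← ENNReal.ofReal_pow (norm_nonneg _),
    ← ENNReal.ofReal_mul (by positivity), ENNReal.ofReal_le_ofReal_iff (by positivity),
    hconst] at h
  refine abs_le_of_sq_le_sq ?_ (by positivity)
  rw [mul_pow, mul_pow, Real.sq_sqrt (by positivity), ← sq_abs]
  linarith

theorem tendsto_homothetyAverage (hF : Continuous F) {x : ℝ} (hx : x ∈ 𝕀) {q : ℕ → ℝ}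
    (hq : ∀ n, q n ∈ 𝕀) (hq0 : Tendsto q atTop (𝓝 0)) :
    Tendsto (fun n => homothetyAverage F x (q n)) atTop (𝓝 (F x)) := by
  obtain ⟨M, hM⟩ := isCompact_Icc.exists_bound_of_continuousOn (hF.continuousOn (s := 𝕀))
  have hlim : Tendsto (fun n => homothetyAverage F x (q n)) atTop (𝓝 (∫ _ in 𝕀, F x)) := by
    refine tendsto_integral_of_dominated_convergence (fun _ => M)
      (fun n => (hF.comp (AffineMap.homothety_continuous x _)).aestronglyMeasurable)
      (integrable_const M) (fun n => ?_) (Eventually.of_forall fun t => ?_)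
    · filter_upwards [ae_restrict_mem measurableSet_Icc] with t ht
      exact hM _ (homothety_mem_Icc hx (hq n) ht)
    · have h : Tendsto (fun n => AffineMap.homothety x (q n) t) atTop (𝓝 x) := by
        simpa [AffineMap.homothety_apply] using (hq0.mul_const (t - x)).add_const x
      exact (hF.tendsto x).comp h
  simpa using hlim

theorem exists_dist_integral_le_norm_nonlocalGrad (hγ : 1 < γ) : ∃ C : ℝ, 0 ≤ C ∧
    ∀ F : energySpace γ, Continuous (F : ℝ → ℝ) → ∀ x ∈ 𝕀,
      dist (∫ t in 𝕀, (F : ℝ → ℝ) t) ((F : ℝ → ℝ) x) ≤ C * ‖nonlocalGrad γ F‖ := by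
  set ρ : ℝ := 2⁻¹ ^ ((γ - 1) / 2)
  have hρ : ρ < 1 := Real.rpow_lt_one (by norm_num) (by norm_num) (by linarith)
  refine ⟨√(2 * (3 / 2) ^ (1 + γ)) / (1 - ρ), by have := sub_pos.2 hρ; positivity,
    fun F hF x hx => ?_⟩
  have hpow : ∀ n : ℕ, (2⁻¹ : ℝ) ^ n ∈ Ioc (0 : ℝ) 1 := fun n =>
    ⟨by positivity, pow_le_one₀ (by norm_num) (by norm_num)⟩
  have hstep : ∀ n : ℕ, dist (homothetyAverage F x (2⁻¹ ^ n)) (homothetyAverage F x (2⁻¹ ^ (n + 1)))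
      ≤ √(2 * (3 / 2) ^ (1 + γ)) * ‖nonlocalGrad γ F‖ * ρ ^ n := fun n => by
    rw [Real.dist_eq, pow_succ, ← div_eq_mul_inv, Real.rpow_pow_comm (by norm_num)]
    exact abs_homothetyAverage_sub_le (by linarith) F hF hx (hpow n).1 (hpow n).2
  have h := dist_le_of_le_geometric_of_tendsto₀ ρ _ hρ hstep <|
    tendsto_homothetyAverage hF hx (fun n => Ioc_subset_Icc_self (hpow n))
      (tendsto_pow_atTop_nhds_zero_of_lt_one (by norm_num) (by norm_num))
  rw [pow_zero, homothetyAverage, AffineMap.homothety_one] at h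
  exact h.trans_eq (by ring)

theorem exists_abs_sub_le_norm_nonlocalGrad (hγ : 1 < γ) : ∃ C : ℝ, 0 ≤ C ∧
    ∀ F : energySpace γ, Continuous (F : ℝ → ℝ) → ∀ x ∈ 𝕀, ∀ y ∈ 𝕀,
      |(F : ℝ → ℝ) x - (F : ℝ → ℝ) y| ≤ C * ‖nonlocalGrad γ F‖ := by
  obtain ⟨C, hC, h⟩ := exists_dist_integral_le_norm_nonlocalGrad hγ
  refine ⟨2 * C, by positivity, fun F hF x hx y hy => ?_⟩
  have htri := dist_triangle_left ((F : ℝ → ℝ) x) ((F : ℝ → ℝ) y) (∫ t in 𝕀, (F : ℝ → ℝ) t)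
  rw [← Real.dist_eq]
  linarith [h F hF x hx, h F hF y hy]

end Morrey

/-! ### Zero boundary values -/

section ZeroTrace

variable {γ a b c d : ℝ} {F G : ℝ → ℝ}

theorem HasBoundaryValues.comp (hF : HasBoundaryValues F a b) {φ : ℝ → ℝ} (hφ : Continuous φ) :
    HasBoundaryValues (φ ∘ F) (φ a) (φ b) := by
  obtain ⟨Fc, hcont, hae, rfl, rfl⟩ := hF
  exact ⟨φ ∘ Fc, hφ.comp_continuousOn hcont, hae.mono fun u hu => congrArg φ hu, rfl, rfl⟩

theorem HasBoundaryValues.comp₂ (hF : HasBoundaryValues F a b) (hG : HasBoundaryValues G c d)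
    {φ : ℝ × ℝ → ℝ} (hφ : Continuous φ) :
    HasBoundaryValues (fun u => φ (F u, G u)) (φ (a, c)) (φ (b, d)) := by
  obtain ⟨Fc, hFcont, hFae, rfl, rfl⟩ := hF
  obtain ⟨Gc, hGcont, hGae, rfl, rfl⟩ := hG
  refine ⟨fun u => φ (Fc u, Gc u), hφ.comp_continuousOn (hFcont.prodMk hGcont), ?_, rfl, rfl⟩
  filter_upwards [hFae, hGae] with u hFu hGu
  rw [hFu, hGu]

theorem HasBoundaryValues.add (hF : HasBoundaryValues F a b) (hG : HasBoundaryValues G c d) :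
    HasBoundaryValues (F + G) (a + c) (b + d) := hF.comp₂ hG continuous_add

theorem HasBoundaryValues.sub (hF : HasBoundaryValues F a b) (hG : HasBoundaryValues G c d) :
    HasBoundaryValues (F - G) (a - c) (b - d) := hF.comp₂ hG continuous_sub

theorem hasBoundaryValues_of_continuous (hF : Continuous F) : HasBoundaryValues F (F 0) (F 1) :=
  ⟨F, hF.continuousOn, EventuallyEq.rfl, rfl, rfl⟩

theorem HasBoundaryValues.exists_continuous (hF : HasBoundaryValues F a b) :
    ∃ Fc : ℝ → ℝ, Continuous Fc ∧ F =ᵐ[volume.restrict 𝕀] Fc ∧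
      (∀ u ≤ 0, Fc u = a) ∧ ∀ u, 1 ≤ u → Fc u = b := by
  obtain ⟨Fc, hcont, hae, rfl, rfl⟩ := hF
  refine ⟨IccExtend zero_le_one (domRestrict 𝕀 Fc), hcont.domRestrict.Icc_extend', ?_,
    fun u hu => IccExtend_of_le_left _ _ hu, fun u hu => IccExtend_of_right_le _ _ hu⟩
  filter_upwards [hae, ae_restrict_mem measurableSet_Icc] with u hu hmem
  rw [hu, IccExtend_of_mem _ _ hmem, domRestrict_apply]

theorem HasBoundaryValues.memLp (hF : HasBoundaryValues F a b) (p : ℝ≥0∞) :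
    MemLp F p (volume.restrict 𝕀) := by
  obtain ⟨Fc, hcont, hae, -⟩ := hF
  obtain ⟨M, hM⟩ := isCompact_Icc.exists_bound_of_continuousOn hcont
  exact (memLp_congr_ae hae).2 <|
    MemLp.of_bound (hcont.aestronglyMeasurable measurableSet_Icc) M <|
      (ae_restrict_mem measurableSet_Icc).mono hM

/-- The functions of finite energy on `[0,1]` with boundary values zero, i.e. `H^{γ/2}_0`. -/
def zeroTrace (γ : ℝ) : Submodule ℝ (energySpace γ) where
  carrier := {F | HasBoundaryValues F 0 0}
  add_mem' hF hG := by simpa using hF.add hG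
  zero_mem' := hasBoundaryValues_of_continuous continuous_zero
  smul_mem' c F hF := by simpa using! hF.comp (continuous_const_mul c)

/-- The increments of functions with boundary values zero, as a subspace of `L²`. -/
def zeroTraceGrad (γ : ℝ) : Submodule ℝ (Lp ℝ 2 (unitGagliardoMeasure γ)) :=
  (zeroTrace γ).map (nonlocalGrad γ)

theorem mem_zeroTrace_iff {F : energySpace γ} : F ∈ zeroTrace γ ↔ HasBoundaryValues F 0 0 := Iff.rfl

theorem exists_continuous_eq_zero_of_mem_zeroTrace {F : energySpace γ} (hF : F ∈ zeroTrace γ) :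
    ∃ w : energySpace γ, Continuous (w : ℝ → ℝ) ∧ (∀ x ∉ Ioo (0 : ℝ) 1, (w : ℝ → ℝ) x = 0) ∧
      F =ᵐ[volume.restrict 𝕀] (w : ℝ → ℝ) ∧ nonlocalGrad γ w = nonlocalGrad γ F := by
  obtain ⟨w, hcont, hae, hleft, hright⟩ := (mem_zeroTrace_iff.1 hF).exists_continuous
  have hw : w ∈ energySpace γ := (energySpace_congr hae).1 F.2
  refine ⟨⟨w, hw⟩, hcont, fun x hx => ?_, hae, nonlocalGrad_congr hw F.2 hae.symm⟩
  by_cases hx0 : x ≤ 0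
  · exact hleft x hx0
  · exact hright x (not_lt.1 fun hx1 => hx ⟨not_le.1 hx0, hx1⟩)

theorem mem_zeroTraceGrad_iff {f : Lp ℝ 2 (unitGagliardoMeasure γ)} : f ∈ zeroTraceGrad γ ↔
    ∃ w : energySpace γ, Continuous (w : ℝ → ℝ) ∧ (∀ x ∉ Ioo (0 : ℝ) 1, (w : ℝ → ℝ) x = 0) ∧
      nonlocalGrad γ w = f := by
  constructor
  · rintro ⟨F, hF, rfl⟩
    obtain ⟨w, hcont, hzero, -, hgrad⟩ := exists_continuous_eq_zero_of_mem_zeroTrace hF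
    exact ⟨w, hcont, hzero, hgrad⟩
  · rintro ⟨w, hcont, hzero, rfl⟩
    refine Submodule.mem_map_of_mem (mem_zeroTrace_iff.2 ?_)
    simpa [hzero] using hasBoundaryValues_of_continuous hcont

theorem exists_abs_le_norm_nonlocalGrad (hγ : 1 < γ) : ∃ C : ℝ, 0 ≤ C ∧
    ∀ w : energySpace γ, Continuous (w : ℝ → ℝ) → (∀ x ∉ Ioo (0 : ℝ) 1, (w : ℝ → ℝ) x = 0) →
      ∀ x, |(w : ℝ → ℝ) x| ≤ C * ‖nonlocalGrad γ w‖ := by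
  obtain ⟨C, hC, h⟩ := exists_abs_sub_le_norm_nonlocalGrad hγ
  refine ⟨C, hC, fun w hcont hzero x => ?_⟩
  by_cases hx : x ∈ Ioo 0 1
  · simpa [hzero] using h w hcont x (Ioo_subset_Icc_self hx) 0 (by simp)
  · rw [hzero x hx, abs_zero]
    positivity

theorem ae_eq_zero_of_nonlocalGrad_eq_zero (hγ : 1 < γ) {F : energySpace γ}
    (hF : F ∈ zeroTrace γ) (h : nonlocalGrad γ F = 0) : (F : ℝ → ℝ) =ᵐ[volume.restrict 𝕀] 0 := by
  obtain ⟨C, -, hmorrey⟩ := exists_abs_le_norm_nonlocalGrad hγ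
  obtain ⟨w, hcont, hzero, hae, hgrad⟩ := exists_continuous_eq_zero_of_mem_zeroTrace hF
  refine hae.mono fun x hx => hx.trans (abs_nonpos_iff.1 ?_)
  simpa [hgrad, h] using hmorrey w hcont hzero x

theorem uniformCauchySeqOn_univ_of_dist_le {α β X : Type*} [PseudoMetricSpace β]
    [PseudoMetricSpace X] {f : ℕ → α → β} {s : ℕ → X} (hs : CauchySeq s) {C : ℝ}
    (h : ∀ m n x, dist (f m x) (f n x) ≤ C * dist (s m) (s n)) :
    UniformCauchySeqOn f atTop univ := by
  refine Metric.uniformCauchySeqOn_iff.2 fun ε hε => ?_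
  obtain ⟨N, hN⟩ := Metric.cauchySeq_iff.1 hs (ε / (|C| + 1)) (by positivity)
  refine ⟨N, fun m hm n hn x _ => (h m n x).trans_lt ?_⟩
  have hlt := (lt_div_iff₀ (by positivity)).1 (hN m hm n hn)
  nlinarith [le_abs_self C, dist_nonneg (x := s m) (y := s n)]

theorem isClosed_zeroTraceGrad (hγ : 1 < γ) :
    IsClosed (zeroTraceGrad γ : Set (Lp ℝ 2 (unitGagliardoMeasure γ))) := by
  refine IsSeqClosed.isClosed fun s f hs hlim => ?_
  choose w hcont hzero hgrad using fun n => mem_zeroTraceGrad_iff.1 (hs n)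
  obtain ⟨C, -, hmorrey⟩ := exists_abs_le_norm_nonlocalGrad hγ
  have hcauchy : UniformCauchySeqOn (fun n => (w n : ℝ → ℝ)) atTop univ := by
    refine uniformCauchySeqOn_univ_of_dist_le (C := C) hlim.cauchySeq fun m n x => ?_
    have h := hmorrey (w m - w n) ((hcont m).sub (hcont n))
      (fun x hx => by simp [hzero m x hx, hzero n x hx]) x
    rwa [map_sub, hgrad, hgrad, ← dist_eq_norm] at h
  choose W hW using fun x => cauchySeq_tendsto_of_complete (hcauchy.cauchySeq (mem_univ x))
  have hWcont : Continuous W :=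
    continuousOn_univ.1 <| (hcauchy.tendstoUniformlyOn_of_tendsto fun x _ => hW x).continuousOn
      (Frequently.of_forall fun n => (hcont n).continuousOn)
  have hfW : f =ᵐ[unitGagliardoMeasure γ] increment W := by
    obtain ⟨ns, hns, hae⟩ := (tendstoInMeasure_of_tendsto_Lp hlim).exists_seq_tendsto_ae
    filter_upwards [hae, ae_all_iff.2 fun n => coeFn_nonlocalGrad (w n)] with p hp hinc
    refine tendsto_nhds_unique hp ?_
    simp only [← hgrad, hinc]
    exact ((hW p.1).sub (hW p.2)).comp hns.tendsto_atTop
  have hWmem : W ∈ energySpace γ := (memLp_congr_ae hfW).1 (Lp.memLp f)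
  refine mem_zeroTraceGrad_iff.2 ⟨⟨W, hWmem⟩, hWcont, fun x hx => ?_,
    Lp.ext ((coeFn_nonlocalGrad _).trans hfW.symm)⟩
  refine tendsto_nhds_unique (hW x) ?_
  simp only [hzero _ x hx, tendsto_const_nhds_iff]

end ZeroTrace

/-! ### Density of test functions -/

section Density

variable {γ : ℝ} {F : ℝ → ℝ}

theorem map_fst_withDensity_comp_sub {k : ℝ → ℝ≥0∞} (hk : Measurable k) :
    (volume.withDensity fun p : ℝ × ℝ => k (p.1 - p.2)).map Prod.fst = (∫⁻ s, k s) • volume := by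
  refine Measure.ext_of_lintegral _ fun f hf => ?_
  rw [lintegral_map hf measurable_fst, lintegral_withDensity_eq_lintegral_mul _ (by fun_prop)
    (by fun_prop), Measure.volume_eq_prod, lintegral_prod _ (by fun_prop), lintegral_smul_measure,
    smul_eq_mul, ← lintegral_const_mul _ hf]
  refine lintegral_congr fun u => ?_
  simp only [Pi.mul_apply]
  rw [lintegral_mul_const _ (by fun_prop), lintegral_sub_left_eq_self]

theorem map_snd_withDensity_comp_sub {k : ℝ → ℝ≥0∞} (hk : Measurable k) :
    (volume.withDensity fun p : ℝ × ℝ => k (p.1 - p.2)).map Prod.snd = (∫⁻ s, k s) • volume := by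
  refine Measure.ext_of_lintegral _ fun f hf => ?_
  rw [lintegral_map hf measurable_snd, lintegral_withDensity_eq_lintegral_mul _ (by fun_prop)
    (by fun_prop), Measure.volume_eq_prod, lintegral_prod_symm _ (by fun_prop),
    lintegral_smul_measure, smul_eq_mul, ← lintegral_const_mul _ hf]
  refine lintegral_congr fun v => ?_
  simp only [Pi.mul_apply]
  rw [lintegral_mul_const _ (by fun_prop), lintegral_sub_right_eq_self]

theorem memLp_increment_withDensity_comp_sub {k : ℝ → ℝ≥0∞} (hk : Measurable k)
    (hk' : ∫⁻ s, k s ≠ ∞) {p : ℝ≥0∞} (hF : MemLp F p) :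
    MemLp (increment F) p (volume.withDensity fun q : ℝ × ℝ => k (q.1 - q.2)) := by
  have hfst := map_fst_withDensity_comp_sub hk ▸ hF.smul_measure hk'
  have hsnd := map_snd_withDensity_comp_sub hk ▸ hF.smul_measure hk'
  exact (hfst.comp_of_map measurable_fst.aemeasurable).sub
    (hsnd.comp_of_map measurable_snd.aemeasurable)

theorem setLIntegral_rpow_abs_ne_top (hγ : 0 < γ) {δ : ℝ} (hδ : 0 < δ) :
    ∫⁻ s in {s : ℝ | δ ≤ |s|}, ENNReal.ofReal (|s| ^ (-(1 + γ))) ≠ ∞ := by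
  have hIci : IntegrableOn (fun s : ℝ => |s| ^ (-(1 + γ))) (Ici δ) := by
    rw [integrableOn_Ici_iff_integrableOn_Ioi]
    refine (integrableOn_Ioi_rpow_of_lt (a := -(1 + γ)) (by linarith) hδ).congr_fun (fun s hs => ?_)
      measurableSet_Ioi
    rw [abs_of_pos (hδ.trans hs)]
  have hIic : IntegrableOn (fun s : ℝ => |s| ^ (-(1 + γ))) (Iic (-δ)) := by
    simpa using hIci.comp_neg
  have hset : {s : ℝ | δ ≤ |s|} = Ici δ ∪ Iic (-δ) := by
    ext s
    simp [le_abs, le_neg]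
  rw [hset]
  exact (hIci.union hIic).lintegral_lt_top.ne

theorem memLp_increment_restrict_le_abs_sub (hγ : 0 < γ) {δ : ℝ} (hδ : 0 < δ) (hF : MemLp F 2) :
    MemLp (increment F) 2 ((gagliardoMeasure γ).restrict {p | δ ≤ |p.1 - p.2|}) := by
  have hs : MeasurableSet {s : ℝ | δ ≤ |s|} := measurableSet_le (by fun_prop) (by fun_prop)
  have hfar : MeasurableSet {p : ℝ × ℝ | δ ≤ |p.1 - p.2|} :=
    measurableSet_le (by fun_prop) (by fun_prop)
  rw [gagliardoMeasure, restrict_withDensity hfar, ← withDensity_indicator hfar]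
  refine memLp_increment_withDensity_comp_sub
    (k := {s | δ ≤ |s|}.indicator fun s => ENNReal.ofReal (|s| ^ (-(1 + γ))))
    (Measurable.indicator (by fun_prop) hs) ?_ hF
  rw [lintegral_indicator hs]
  exact setLIntegral_rpow_abs_ne_top hγ hδ

theorem increment_eq_zero_of_notMem {K : Set ℝ} {δ : ℝ} (hK : Metric.cthickening δ K ⊆ 𝕀)
    (hFK : Function.support F ⊆ K) {p : ℝ × ℝ} (hp : p ∉ 𝕀 ×ˢ 𝕀) (hpδ : |p.1 - p.2| < δ) :
    increment F p = 0 := by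
  have hzero : ∀ x y : ℝ, |x - y| < δ → y ∉ 𝕀 → F x = 0 := fun x y hxy hy => by
    by_contra hx
    exact hy (hK (Metric.mem_cthickening_of_dist_le y x δ K (hFK hx)
      (by rw [Real.dist_eq, abs_sub_comm]; exact hxy.le)))
  have hzero' : ∀ x ∉ 𝕀, F x = 0 := fun x hx =>
    hzero x x (by simpa using (abs_nonneg _).trans_lt hpδ) hx
  rw [mem_prod, not_and_or] at hp
  rcases hp with h₁ | h₂
  · rw [increment_apply, hzero' _ h₁, hzero _ _ (by rwa [abs_sub_comm]) h₁, sub_zero]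
  · rw [increment_apply, hzero' _ h₂, hzero _ _ hpδ h₂, sub_zero]

theorem memLp_increment_gagliardoMeasure (hγ : 0 < γ) (hF : MemLp F 2) (hE : F ∈ energySpace γ)
    {K : Set ℝ} {δ : ℝ} (hδ : 0 < δ) (hK : Metric.cthickening δ K ⊆ 𝕀)
    (hFK : Function.support F ⊆ K) : MemLp (increment F) 2 (gagliardoMeasure γ) := by
  have hsq : MeasurableSet (𝕀 ×ˢ 𝕀) := measurableSet_Icc.prod measurableSet_Icc
  have hfar : MeasurableSet {p : ℝ × ℝ | δ ≤ |p.1 - p.2|} :=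
    measurableSet_le (by fun_prop) (by fun_prop)
  have heq : increment F = (𝕀 ×ˢ 𝕀).indicator (increment F) +
      (𝕀 ×ˢ 𝕀)ᶜ.indicator ({p | δ ≤ |p.1 - p.2|}.indicator (increment F)) := by
    have h : (𝕀 ×ˢ 𝕀)ᶜ.indicator ({p | δ ≤ |p.1 - p.2|}.indicator (increment F)) =
        (𝕀 ×ˢ 𝕀)ᶜ.indicator (increment F) := indicator_congr fun p hp =>
      indicator_apply_eq_self.2 fun h => increment_eq_zero_of_notMem hK hFK hp (not_le.1 h)
    rw [h, indicator_self_add_compl]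
  rw [heq]
  exact ((memLp_indicator_iff_restrict hsq).2 hE).add
    (((memLp_indicator_iff_restrict hfar).2
      (memLp_increment_restrict_le_abs_sub hγ hδ hF)).indicator hsq.compl)

theorem measurePreserving_sub_diag (γ s : ℝ) :
    MeasurePreserving (fun p => p - (s, s)) (gagliardoMeasure γ) (gagliardoMeasure γ) := by
  refine ⟨by fun_prop, Measure.ext_of_lintegral _ fun f hf => ?_⟩
  rw [lintegral_map hf (by fun_prop), gagliardoMeasure,
    lintegral_withDensity_eq_lintegral_mul _ (by fun_prop) (by fun_prop),
    lintegral_withDensity_eq_lintegral_mul _ (by fun_prop) hf,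
    ← lintegral_sub_right_eq_self (_ * f) (s, s)]
  simp

/-- Averaging translates does not increase the energy, by Jensen's inequality and the invariance of
`gagliardoMeasure γ` under diagonal translations. -/
theorem eLpNorm_increment_average_le {ν : Measure ℝ} [IsProbabilityMeasure ν] (hF : Continuous F)
    (hν : ∀ u, Integrable (fun s => F (u - s)) ν) :
    eLpNorm (increment fun u => ∫ s, F (u - s) ∂ν) 2 (gagliardoMeasure γ) ≤
      eLpNorm (increment F) 2 (gagliardoMeasure γ) := by
  have hinc := (continuous_increment hF).measurable
  have haverage : ∀ p : ℝ × ℝ, increment (fun u => ∫ s, F (u - s) ∂ν) p =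
      ∫ s, increment F (p - (s, s)) ∂ν := fun p => (integral_sub (hν p.1) (hν p.2)).symm
  have hsf : SFinite (gagliardoMeasure γ) := by unfold gagliardoMeasure; infer_instance
  rw [← ENNReal.pow_le_pow_left_iff two_ne_zero, eLpNorm_two_sq, eLpNorm_two_sq]
  calc ∫⁻ p, ‖increment (fun u => ∫ s, F (u - s) ∂ν) p‖ₑ ^ 2 ∂gagliardoMeasure γ
      ≤ ∫⁻ p, ∫⁻ s, ‖increment F (p - (s, s))‖ₑ ^ 2 ∂ν ∂gagliardoMeasure γ := by
        refine lintegral_mono fun p => ?_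
        rw [haverage]
        exact enorm_integral_sq_le_lintegral (hinc.comp (by fun_prop)).aestronglyMeasurable
    _ = ∫⁻ s, ∫⁻ p, ‖increment F (p - (s, s))‖ₑ ^ 2 ∂gagliardoMeasure γ ∂ν :=
        lintegral_lintegral_swap ((hinc.comp (by fun_prop)).enorm.pow_const 2).aemeasurable
    _ = ∫⁻ _, ∫⁻ p, ‖increment F p‖ₑ ^ 2 ∂gagliardoMeasure γ ∂ν := by
        refine lintegral_congr fun s => ?_
        exact (measurePreserving_sub_diag γ s).lintegral_comp (hinc.enorm.pow_const 2)
    _ = ∫⁻ p, ‖increment F p‖ₑ ^ 2 ∂gagliardoMeasure γ := by simp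

theorem tendsto_nonlocalGrad_of_eLpNorm_le {f : ℕ → energySpace γ} {F : energySpace γ}
    {μ : Measure (ℝ × ℝ)} (hμ : unitGagliardoMeasure γ ≤ μ)
    (hf : ∀ n, Measurable (f n : ℝ → ℝ)) (hF : MemLp (increment F) 2 μ)
    (hlim : ∀ x, Tendsto (fun n => (f n : ℝ → ℝ) x) atTop (𝓝 ((F : ℝ → ℝ) x)))
    (hle : ∀ n, eLpNorm (increment (f n)) 2 μ ≤ eLpNorm (increment F) 2 μ) :
    Tendsto (fun n => nonlocalGrad γ (f n)) atTop (𝓝 (nonlocalGrad γ F)) := by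
  refine (Lp.tendsto_Lp_iff_tendsto_eLpNorm'' _ (fun n => (f n).2) _ F.2).2 ?_
  have hstrong := tendsto_eLpNorm_two_sub_of_ae_tendsto
    (fun n => (measurable_increment (hf n)).aestronglyMeasurable) hF
    (Eventually.of_forall fun p => (hlim p.1).sub (hlim p.2)) hle
  exact tendsto_of_tendsto_of_tendsto_of_le_of_le tendsto_const_nhds hstrong
    (fun _ => zero_le) fun n => eLpNorm_mono_measure _ hμ

theorem IsSpatialTest.hasCompactSupport (hF : IsSpatialTest F) : HasCompactSupport F := by
  obtain ⟨-, K, hK, -, hFK⟩ := hF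
  exact HasCompactSupport.of_support_subset_isCompact hK hFK

theorem IsSpatialTest.mem_energySpace (hγ : γ < 2) (hF : IsSpatialTest F) :
    F ∈ energySpace γ := by
  obtain ⟨L, hL⟩ := hF.1.lipschitzWith_of_hasCompactSupport hF.hasCompactSupport (by simp)
  exact mem_energySpace_of_lipschitzWith hγ hL

open Convolution in
theorem eLpNorm_increment_convolution_normed_le (φ : ContDiffBump (0 : ℝ)) (hF : Continuous F) :
    eLpNorm (increment (φ.normed volume ⋆[ContinuousLinearMap.lsmul ℝ ℝ, volume] F)) 2
      (gagliardoMeasure γ) ≤ eLpNorm (increment F) 2 (gagliardoMeasure γ) := by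
  set ρ := φ.normed volume
  set ν : Measure ℝ := volume.withDensity fun s => ENNReal.ofReal (ρ s)
  have hρ : Continuous ρ := φ.continuous_normed
  have hρ_meas : Measurable fun s => ENNReal.ofReal (ρ s) := by fun_prop
  have hρ_top : ∀ᵐ s, ENNReal.ofReal (ρ s) < ∞ := Eventually.of_forall fun _ => ofReal_lt_top
  have hρ_toReal : ∀ s, (ENNReal.ofReal (ρ s)).toReal = ρ s := fun s =>
    ENNReal.toReal_ofReal (φ.nonneg_normed s)
  have hν : IsProbabilityMeasure ν := ⟨by
    rw [withDensity_apply _ .univ, setLIntegral_univ, ← ofReal_integral_eq_lintegral_ofReal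
      (hρ.integrable_of_hasCompactSupport φ.hasCompactSupport_normed)
      (Eventually.of_forall φ.nonneg_normed), φ.integral_normed, ENNReal.ofReal_one]⟩
  have hconv : ρ ⋆[ContinuousLinearMap.lsmul ℝ ℝ, volume] F = fun u => ∫ s, F (u - s) ∂ν := by
    ext u
    simp only [ν, integral_withDensity_eq_integral_toReal_smul hρ_meas hρ_top, hρ_toReal,
      convolution, ContinuousLinearMap.lsmul_apply]
  rw [hconv]
  refine eLpNorm_increment_average_le hF fun u => ?_
  simp only [ν, integrable_withDensity_iff_integrable_smul' hρ_meas hρ_top, hρ_toReal]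
  exact (hρ.smul (by fun_prop)).integrable_of_hasCompactSupport
    φ.hasCompactSupport_normed.smul_right

open Convolution in
theorem isSpatialTest_convolution_normed (φ : ContDiffBump (0 : ℝ)) (hF : Continuous F)
    {K : Set ℝ} (hK : IsCompact K) (hφK : Metric.cthickening φ.rOut K ⊆ Ioo 0 1)
    (hFK : Function.support F ⊆ K) :
    IsSpatialTest (φ.normed volume ⋆[ContinuousLinearMap.lsmul ℝ ℝ, volume] F) := by
  refine ⟨φ.hasCompactSupport_normed.contDiff_convolution_left _ φ.contDiff_normed
    hF.locallyIntegrable, _, hK.cthickening, hφK, (support_convolution_subset _).trans ?_⟩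
  rintro _ ⟨s, hs, v, hv, rfl⟩
  rw [φ.support_normed_eq, Metric.mem_ball, dist_eq_norm, sub_zero] at hs
  refine Metric.mem_cthickening_of_dist_le _ v _ _ (hFK hv) ?_
  simpa [dist_eq_norm] using hs.le

theorem nonlocalGrad_mem_closure_of_compact_support (hγ : γ ∈ Ioo 0 2) {F : energySpace γ}
    (hF : Continuous (F : ℝ → ℝ)) {K : Set ℝ} (hK : IsCompact K) (hKI : K ⊆ Ioo 0 1)
    (hFK : Function.support (F : ℝ → ℝ) ⊆ K) :
    nonlocalGrad γ F ∈ closure (nonlocalGrad γ '' {G | IsSpatialTest G}) := by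
  obtain ⟨δ, hδ, hδK⟩ := hK.exists_cthickening_subset_open isOpen_Ioo hKI
  let φ : ℕ → ContDiffBump (0 : ℝ) := fun n =>
    ⟨δ / (n + 1) / 2, δ / (n + 1), by positivity, half_lt_self (by positivity)⟩
  have hφ : Tendsto (fun n => (φ n).rOut) atTop (𝓝 0) := by
    simpa [φ, div_eq_mul_inv] using tendsto_one_div_add_atTop_nhds_zero_nat.const_mul δ
  have hφδ : ∀ n, (φ n).rOut ≤ δ := fun n => div_le_self hδ.le (by simp)
  have htest := fun n => isSpatialTest_convolution_normed (φ n) hF hK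
    ((Metric.cthickening_mono (hφδ n) K).trans hδK) hFK
  have hL2 : MemLp (F : ℝ → ℝ) 2 :=
    hF.memLp_of_hasCompactSupport (HasCompactSupport.of_support_subset_isCompact hK hFK)
  refine mem_closure_of_tendsto (tendsto_nonlocalGrad_of_eLpNorm_le
    (f := fun n => ⟨_, (htest n).mem_energySpace hγ.2⟩) Measure.restrict_le_self
    (fun n => (htest n).1.continuous.measurable)
    (memLp_increment_gagliardoMeasure hγ.1 hL2 F.2 hδ (hδK.trans Ioo_subset_Icc_self) hFK)
    (ContDiffBump.convolution_tendsto_right_of_continuous hφ hF)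
    fun n => eLpNorm_increment_convolution_normed_le (φ n) hF)
    (Eventually.of_forall fun n => mem_image_of_mem _ (htest n))

theorem lipschitzWith_sub_clamp (ε : ℝ) : LipschitzWith 1 fun x : ℝ => x - max (-ε) (min ε x) :=
  lipschitzWith_sub_of_monotone
    (fun _ _ h => max_le_max_left _ (min_le_min_left _ h))
    ((LipschitzWith.id.const_min ε).const_max (-ε))

theorem sub_clamp_eq_zero {ε x : ℝ} (hx : |x| ≤ ε) : x - max (-ε) (min ε x) = 0 := by
  rw [min_eq_right (le_of_abs_le hx), max_eq_right (neg_le_of_abs_le hx), sub_self]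

/-- Subtracting the clamp of `F` at small height makes the support compact inside `(0, 1)` and does
not increase the energy. -/
theorem nonlocalGrad_mem_closure_image_isSpatialTest (hγ : γ ∈ Ioo 0 2) {F : energySpace γ}
    (hF : Continuous (F : ℝ → ℝ)) (hF₀ : ∀ x ∉ Ioo (0 : ℝ) 1, (F : ℝ → ℝ) x = 0) :
    nonlocalGrad γ F ∈ closure (nonlocalGrad γ '' {G | IsSpatialTest G}) := by
  let ε : ℕ → ℝ := fun n => 1 / (n + 1)
  have hε : Tendsto ε atTop (𝓝 0) := tendsto_one_div_add_atTop_nhds_zero_nat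
  have hεpos : ∀ n, 0 < ε n := fun n => by positivity
  let f : ℕ → energySpace γ := fun n =>
    ⟨(fun x => x - max (-ε n) (min (ε n) x)) ∘ F,
      comp_mem_energySpace (lipschitzWith_sub_clamp (ε n)) hF.measurable F.2⟩
  have hf : ∀ n, Continuous (f n : ℝ → ℝ) := fun n =>
    (lipschitzWith_sub_clamp (ε n)).continuous.comp hF
  have hsub : ∀ n, {x | ε n ≤ |(F : ℝ → ℝ) x|} ⊆ Ioo 0 1 := fun n x hx => by
    by_contra hx'
    have hle : ε n ≤ |(F : ℝ → ℝ) x| := hx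
    rw [hF₀ x hx', abs_zero] at hle
    exact (hεpos n).not_ge hle
  have hmem : ∀ n, nonlocalGrad γ (f n) ∈ closure (nonlocalGrad γ '' {G | IsSpatialTest G}) :=
    fun n => nonlocalGrad_mem_closure_of_compact_support hγ (hf n)
      (Metric.isCompact_of_isClosed_isBounded (isClosed_le continuous_const hF.abs)
        ((Metric.isBounded_Ioo 0 1).subset (hsub n))) (hsub n)
      fun x hx => by
        by_contra hlt
        exact hx (sub_clamp_eq_zero (not_le.1 hlt).le)
  have hlim : ∀ x, Tendsto (fun n => (f n : ℝ → ℝ) x) atTop (𝓝 ((F : ℝ → ℝ) x)) := fun x => by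
    have hclamp : Tendsto (fun n => (f n : ℝ → ℝ) x) atTop
        (𝓝 ((F : ℝ → ℝ) x - max (-0) (min 0 ((F : ℝ → ℝ) x)))) :=
      tendsto_const_nhds.sub (hε.neg.max (hε.min tendsto_const_nhds))
    simpa using hclamp
  exact isClosed_closure.mem_of_tendsto (tendsto_nonlocalGrad_of_eLpNorm_le le_rfl
    (fun n => (hf n).measurable) F.2 hlim fun n =>
      eLpNorm_mono (norm_increment_comp_le (lipschitzWith_sub_clamp (ε n)) F))
    (Eventually.of_forall hmem)

theorem mem_orthogonal_zeroTraceGrad_iff (hγ : γ ∈ Ioo 0 2)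
    {f : Lp ℝ 2 (unitGagliardoMeasure γ)} : f ∈ (zeroTraceGrad γ)ᗮ ↔
      ∀ G : energySpace γ, IsSpatialTest G → inner ℝ (nonlocalGrad γ G) f = 0 := by
  rw [Submodule.mem_orthogonal]
  constructor
  · intro h G hG
    obtain ⟨hsmooth, K, -, hK, hGK⟩ := hG
    exact h _ (mem_zeroTraceGrad_iff.2
      ⟨G, hsmooth.continuous, fun x hx => by_contra fun h0 => hx (hK (hGK h0)), rfl⟩)
  · intro h g hg
    obtain ⟨w, hw, hw₀, rfl⟩ := mem_zeroTraceGrad_iff.1 hg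
    have hsub : nonlocalGrad γ '' {G | IsSpatialTest G} ⊆ {g | inner ℝ g f = 0} :=
      image_subset_iff.2 h
    exact closure_minimal hsub (isClosed_eq (continuous_id.inner continuous_const) continuous_const)
      (nonlocalGrad_mem_closure_image_isSpatialTest hγ hw hw₀)

end Density

/-! ### The regional fractional Laplacian -/

section FractionalLaplacian

variable {γ ε t : ℝ} {G : ℝ → ℝ}

/-- The kernel `|t| ^ (-(1 + γ))` truncated to `ε ≤ |t|`. -/
def truncKernel (γ ε : ℝ) : ℝ → ℝ := {t | ε ≤ |t|}.indicator fun t => |t| ^ (-(1 + γ))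

/-- The regional fractional Laplacian with truncated kernel; its limit as `ε → 0⁺` is the principal
value defining `𝕃^γ`. -/
def truncLap (γ ε : ℝ) (G : ℝ → ℝ) (u : ℝ) : ℝ :=
  cGamma γ * ∫ v in 𝕀, (G v - G u) * truncKernel γ ε (v - u)

theorem measurableSet_le_abs (ε : ℝ) : MeasurableSet {t : ℝ | ε ≤ |t|} :=
  measurableSet_le measurable_const measurable_norm

theorem measurable_truncKernel (γ ε : ℝ) : Measurable (truncKernel γ ε) :=
  Measurable.indicator (by fun_prop) (measurableSet_le_abs ε)

theorem even_truncKernel (γ ε : ℝ) : Function.Even (truncKernel γ ε) := fun t => by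
  simp [truncKernel, indicator_apply]

theorem truncKernel_nonneg (γ ε t : ℝ) : 0 ≤ truncKernel γ ε t :=
  indicator_nonneg (fun t _ => by positivity) t

theorem truncKernel_le_abs_rpow (γ ε t : ℝ) : truncKernel γ ε t ≤ |t| ^ (-(1 + γ)) :=
  indicator_le_self' (f := fun t : ℝ => |t| ^ (-(1 + γ))) (fun t _ => by positivity) t

theorem truncKernel_le_rpow (hγ : -1 ≤ γ) (hε : 0 < ε) (t : ℝ) :
    truncKernel γ ε t ≤ ε ^ (-(1 + γ)) :=
  indicator_le' (fun t ht => Real.rpow_le_rpow_of_nonpos hε ht (by linarith))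
    (fun t _ => by positivity) t

theorem tendsto_truncKernel (γ : ℝ) (ht : t ≠ 0) :
    Tendsto (fun ε => truncKernel γ ε t) (𝓝[>] 0) (𝓝 (|t| ^ (-(1 + γ)))) := by
  refine tendsto_const_nhds.congr' ?_
  filter_upwards [Ioc_mem_nhdsGT (abs_pos.2 ht)] with ε hε
  exact (indicator_of_mem (s := {t : ℝ | ε ≤ |t|}) hε.2 fun t => |t| ^ (-(1 + γ))).symm

theorem sq_mul_abs_rpow_le (t r : ℝ) : t ^ 2 * |t| ^ r ≤ |t| ^ (2 + r) := by
  rcases eq_or_ne t 0 with rfl | ht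
  · simp only [ne_eq, OfNat.ofNat_ne_zero, not_false_eq_true, zero_pow, zero_mul]
    positivity
  · rw [Real.rpow_add (abs_pos.2 ht), Real.rpow_ofNat, sq_abs]

theorem hasFracLapAt_iff {u L : ℝ} :
    HasFracLapAt γ G u L ↔ Tendsto (fun ε => truncLap γ ε G u) (𝓝[>] 0) (𝓝 L) := by
  refine iff_of_eq (congrArg (Tendsto · _ _) (funext fun ε => ?_))
  have hset : {v : ℝ | v ∈ 𝕀 ∧ ε ≤ |u - v|} = 𝕀 ∩ (· - u) ⁻¹' {t | ε ≤ |t|} := by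
    ext v
    exact and_congr_right fun _ => by rw [abs_sub_comm]; rfl
  have hmeas := (measurable_sub_const u) (measurableSet_le_abs ε)
  rw [hset, ← setIntegral_indicator hmeas, truncLap]
  refine congrArg (cGamma γ * ·) (integral_congr_ae (Eventually.of_forall fun v => ?_))
  exact indicator_mul_right _ _ _

theorem HasFracLapAt.fracLap_eq {u L : ℝ} (h : HasFracLapAt γ G u L) : fracLap γ G u = L := by
  have hex : ∃ L, HasFracLapAt γ G u L := ⟨L, h⟩
  rw [fracLap, dif_pos hex]
  exact tendsto_nhds_unique hex.choose_spec h

/-- If `fderiv ℝ G u ≠ 0`, then a ball around `u` of fixed radius lies in `s`, so the linear Taylor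
term can be cut off symmetrically; being odd, it does not contribute to the principal value. -/
theorem exists_odd_abs_sub_sub_le_sq {s : Set ℝ} (hG : ContDiff ℝ 2 G) (hc : HasCompactSupport G)
    (hs : tsupport G ⊆ interior s) : ∃ C, ∀ u, ∃ ℓ : ℝ → ℝ, Function.Odd ℓ ∧ Measurable ℓ ∧
      (∀ v ∉ s, ℓ (v - u) = 0) ∧ ∀ v, |G v - G u - ℓ (v - u)| ≤ C * (v - u) ^ 2 := by
  obtain ⟨M, hM⟩ := hc.exists_bound_of_continuous hG.continuous
  obtain ⟨L, hL⟩ := (hG.fderiv_right (m := 1) (by norm_num)).lipschitzWith_of_hasCompactSupport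
    (hc.fderiv (𝕜 := ℝ)) one_ne_zero
  obtain ⟨δ, hδ, hδs⟩ := hc.isCompact.exists_cthickening_subset_open isOpen_interior hs
  have hM0 : 0 ≤ 2 * M := by linarith [(norm_nonneg _).trans (hM 0)]
  refine ⟨L + 2 * M / δ ^ 2, fun u => ⟨(Metric.ball 0 δ).indicator (fderiv ℝ G u), fun t => ?_,
    (fderiv ℝ G u).measurable.indicator measurableSet_ball, fun v hv => ?_, fun v => ?_⟩⟩
  · by_cases ht : |t| < δ <;> simp [indicator, ht]
  · refine indicator_apply_eq_zero.2 fun hvu => ?_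
    suffices u ∉ tsupport G by
      rw [image_eq_zero_of_notMem_tsupport fun h => this (tsupport_fderiv_subset ℝ h)]
      rfl
    refine fun hu => hv (interior_subset (hδs ?_))
    refine Metric.mem_cthickening_of_dist_le v u δ _ hu ?_
    rw [dist_eq_norm]
    exact (mem_ball_zero_iff.1 hvu).le
  · by_cases hvu : v - u ∈ Metric.ball 0 δ
    · rw [indicator_of_mem hvu, ← Real.norm_eq_abs, add_mul]
      refine (norm_sub_sub_fderiv_le (hG.differentiable (by norm_num)) hL u v).trans ?_
      rw [Real.norm_eq_abs, sq_abs]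
      exact le_add_of_nonneg_right (by positivity)
    · have hfar : δ ^ 2 ≤ (v - u) ^ 2 := by
        rw [← sq_abs (v - u)]
        exact pow_le_pow_left₀ hδ.le (by simpa using hvu) 2
      rw [indicator_of_notMem hvu, sub_zero, add_mul]
      calc |G v - G u| ≤ 2 * M := by
            linarith [abs_sub (G v) (G u), hM u, hM v, Real.norm_eq_abs (G u),
              Real.norm_eq_abs (G v)]
        _ = 2 * M / δ ^ 2 * δ ^ 2 := by field_simp
        _ ≤ 2 * M / δ ^ 2 * (v - u) ^ 2 := by gcongr
        _ ≤ L * (v - u) ^ 2 + 2 * M / δ ^ 2 * (v - u) ^ 2 :=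
            le_add_of_nonneg_left (by positivity)

section Remainder

variable {C u : ℝ} {r : ℝ → ℝ}

theorem abs_mul_truncKernel_le (hr : ∀ v, |r v| ≤ C * (v - u) ^ 2) (v : ℝ) :
    |r v * truncKernel γ ε (v - u)| ≤ C * |v - u| ^ (1 - γ) := by
  have hC : 0 ≤ C := by simpa using (abs_nonneg _).trans (hr (u + 1))
  have hk := truncKernel_nonneg γ ε (v - u)
  calc |r v * truncKernel γ ε (v - u)| = |r v| * truncKernel γ ε (v - u) := by
        rw [abs_mul, abs_of_nonneg hk]
    _ ≤ C * (v - u) ^ 2 * |v - u| ^ (-(1 + γ)) :=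
        mul_le_mul (hr v) (truncKernel_le_abs_rpow γ ε _) hk (by positivity)
    _ ≤ C * |v - u| ^ (1 - γ) := by
        rw [mul_assoc, show 1 - γ = 2 + -(1 + γ) by ring]
        gcongr
        exact sq_mul_abs_rpow_le _ _

theorem integrableOn_mul_truncKernel (hγ : γ < 2) (hm : Measurable r)
    (hr : ∀ v, |r v| ≤ C * (v - u) ^ 2) :
    IntegrableOn (fun v => r v * truncKernel γ ε (v - u)) 𝕀 := by
  refine ((integrableOn_Icc_abs_sub_rpow (by linarith) u).const_mul C).mono'
    (hm.mul ((measurable_truncKernel γ ε).comp (measurable_sub_const u))).aestronglyMeasurable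
    (Eventually.of_forall (abs_mul_truncKernel_le hr))

theorem abs_setIntegral_mul_truncKernel_le (hγ : γ < 2) (hu : u ∈ 𝕀)
    (hr : ∀ v, |r v| ≤ C * (v - u) ^ 2) :
    |∫ v in 𝕀, r v * truncKernel γ ε (v - u)| ≤ C * ∫ s in (-1)..1, |s| ^ (1 - γ) := by
  have hC : 0 ≤ C := by simpa using (abs_nonneg _).trans (hr (u + 1))
  have hγ' : -1 < 1 - γ := by linarith
  calc |∫ v in 𝕀, r v * truncKernel γ ε (v - u)|
      ≤ ∫ v in 𝕀, C * |v - u| ^ (1 - γ) :=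
        norm_integral_le_of_norm_le (f := fun v => r v * truncKernel γ ε (v - u))
          ((integrableOn_Icc_abs_sub_rpow hγ' u).const_mul C)
          (Eventually.of_forall (abs_mul_truncKernel_le hr))
    _ ≤ C * ∫ s in (-1)..1, |s| ^ (1 - γ) := by
        rw [integral_const_mul]
        gcongr
        exact setIntegral_Icc_abs_sub_rpow_le hγ' hu

theorem tendsto_setIntegral_mul_truncKernel (hγ : γ < 2) (hm : Measurable r)
    (hr : ∀ v, |r v| ≤ C * (v - u) ^ 2) :
    Tendsto (fun ε => ∫ v in 𝕀, r v * truncKernel γ ε (v - u)) (𝓝[>] 0)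
      (𝓝 (∫ v in 𝕀, r v * |v - u| ^ (-(1 + γ)))) := by
  refine tendsto_integral_filter_of_dominated_convergence (fun v => C * |v - u| ^ (1 - γ))
    (Eventually.of_forall fun ε => (integrableOn_mul_truncKernel hγ hm hr).1)
    (Eventually.of_forall fun ε => Eventually.of_forall (abs_mul_truncKernel_le hr))
    ((integrableOn_Icc_abs_sub_rpow (by linarith) u).const_mul C) ?_
  filter_upwards [ae_restrict_of_ae (Measure.ae_ne volume u)] with v hv
  exact (tendsto_truncKernel γ (sub_ne_zero.2 hv)).const_mul _

theorem setIntegral_sub_mul_truncKernel_eq (hγ : γ ∈ Ioo 0 2) (hε : 0 < ε) (hG : Continuous G)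
    {ℓ : ℝ → ℝ} (hodd : Function.Odd ℓ) (hm : Measurable ℓ) (hℓ : ∀ v ∉ 𝕀, ℓ (v - u) = 0)
    (hr : ∀ v, |G v - G u - ℓ (v - u)| ≤ C * (v - u) ^ 2) :
    ∫ v in 𝕀, (G v - G u) * truncKernel γ ε (v - u) =
      ∫ v in 𝕀, (G v - G u - ℓ (v - u)) * truncKernel γ ε (v - u) := by
  have hsub : Measurable fun v : ℝ => v - u := measurable_sub_const u
  have hk : Measurable fun v => truncKernel γ ε (v - u) := (measurable_truncKernel γ ε).comp hsub
  have hGk : IntegrableOn (fun v => (G v - G u) * truncKernel γ ε (v - u)) 𝕀 := by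
    refine Integrable.mul_bdd (c := ε ^ (-(1 + γ)))
      ((hG.sub continuous_const).integrableOn_Icc) hk.aestronglyMeasurable
      (Eventually.of_forall fun v => ?_)
    rw [Real.norm_of_nonneg (truncKernel_nonneg γ ε _)]
    exact truncKernel_le_rpow (by linarith [hγ.1]) hε _
  have hrk : IntegrableOn (fun v => (G v - G u - ℓ (v - u)) * truncKernel γ ε (v - u)) 𝕀 :=
    integrableOn_mul_truncKernel hγ.2 ((hG.measurable.sub_const _).sub (hm.comp hsub)) hr
  have hzero : ∫ v in 𝕀, (ℓ * truncKernel γ ε) (v - u) = 0 :=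
    setIntegral_comp_sub_eq_zero_of_odd (hodd.mul_even (even_truncKernel γ ε)) fun v hv => by
      rw [Pi.mul_apply, hℓ v hv, zero_mul]
  rw [← sub_eq_zero, ← integral_sub hGk hrk]
  refine (integral_congr_ae (Eventually.of_forall fun v => ?_)).trans hzero
  simp only [Pi.mul_apply]
  ring

end Remainder

theorem IsSpatialTest.tsupport_subset (hG : IsSpatialTest G) : tsupport G ⊆ Ioo 0 1 := by
  obtain ⟨K, hK, hK01, hGK⟩ := hG.2
  exact (closure_minimal hGK hK.isClosed).trans hK01

theorem IsSpatialTest.exists_truncLap_eq (hγ : γ ∈ Ioo 0 2) (hG : IsSpatialTest G) :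
    ∃ C, ∀ u, ∃ r : ℝ → ℝ, Measurable r ∧ (∀ v, |r v| ≤ C * (v - u) ^ 2) ∧
      ∀ ε > 0, truncLap γ ε G u = cGamma γ * ∫ v in 𝕀, r v * truncKernel γ ε (v - u) := by
  obtain ⟨C, hC⟩ := exists_odd_abs_sub_sub_le_sq (s := 𝕀) (hG.1.of_le (by norm_cast))
    hG.hasCompactSupport (by rw [interior_Icc]; exact hG.tsupport_subset)
  refine ⟨C, fun u => ?_⟩
  obtain ⟨ℓ, hodd, hm, hℓ, hr⟩ := hC u
  have hG' := hG.1.continuous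
  exact ⟨fun v => G v - G u - ℓ (v - u), by fun_prop, hr, fun ε hε =>
    congrArg _ (setIntegral_sub_mul_truncKernel_eq hγ hε hG' hodd hm hℓ hr)⟩

theorem IsSpatialTest.exists_abs_truncLap_le (hγ : γ ∈ Ioo 0 2) (hG : IsSpatialTest G) :
    ∃ B, ∀ ε > 0, ∀ u ∈ 𝕀, |truncLap γ ε G u| ≤ B := by
  obtain ⟨C, hC⟩ := hG.exists_truncLap_eq hγ
  have hc := (cGamma_pos hγ.1).le
  refine ⟨cGamma γ * (C * ∫ s in (-1)..1, |s| ^ (1 - γ)), fun ε hε u hu => ?_⟩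
  obtain ⟨r, -, hr, htrunc⟩ := hC u
  rw [htrunc ε hε, abs_mul, abs_of_nonneg hc]
  gcongr
  exact abs_setIntegral_mul_truncKernel_le hγ.2 hu hr

theorem IsSpatialTest.tendsto_truncLap (hγ : γ ∈ Ioo 0 2) (hG : IsSpatialTest G) (u : ℝ) :
    Tendsto (fun ε => truncLap γ ε G u) (𝓝[>] 0) (𝓝 (fracLap γ G u)) := by
  obtain ⟨C, hC⟩ := hG.exists_truncLap_eq hγ
  obtain ⟨r, hm, hr, htrunc⟩ := hC u
  have hlim : Tendsto (fun ε => truncLap γ ε G u) (𝓝[>] 0)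
      (𝓝 (cGamma γ * ∫ v in 𝕀, r v * |v - u| ^ (-(1 + γ)))) := by
    refine ((tendsto_setIntegral_mul_truncKernel hγ.2 hm hr).const_mul _).congr' ?_
    filter_upwards [self_mem_nhdsWithin] with ε hε using (htrunc ε hε).symm
  rwa [(hasFracLapAt_iff.2 hlim).fracLap_eq]

theorem integral_mul_integral_sub_mul_eq {α : Type*} [MeasurableSpace α] {μ : Measure α} [SFinite μ]
    {F G : α → ℝ} {k : α × α → ℝ} (hk : ∀ p, k p.swap = k p)
    (hint : Integrable (fun p => F p.1 * ((G p.2 - G p.1) * k p)) (μ.prod μ)) :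
    ∫ u, F u * ∫ v, (G v - G u) * k (u, v) ∂μ ∂μ =
      -(1 / 2) * ∫ p, (G p.1 - G p.2) * (F p.1 - F p.2) * k p ∂μ.prod μ := by
  set J : α × α → ℝ := fun p => F p.1 * ((G p.2 - G p.1) * k p)
  have hJ : ∫ u, F u * ∫ v, (G v - G u) * k (u, v) ∂μ ∂μ = ∫ p, J p ∂μ.prod μ := by
    simp_rw [integral_prod _ hint, ← integral_const_mul, J]
  have hsymm : ∫ p, (G p.1 - G p.2) * (F p.1 - F p.2) * k p ∂μ.prod μ =
      -(∫ p, J p ∂μ.prod μ + ∫ p, J p.swap ∂μ.prod μ) := by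
    have hadd := integral_add hint hint.swap
    simp only [Function.comp_apply] at hadd
    rw [← hadd, ← integral_neg]
    refine integral_congr_ae (Eventually.of_forall fun p => ?_)
    simp only [J, hk p, Prod.fst_swap, Prod.snd_swap]
    ring
  rw [hJ, hsymm, integral_prod_swap]
  ring

theorem IsSpatialTest.integral_mul_truncLap (hγ : -1 ≤ γ) (hε : 0 < ε) (hG : IsSpatialTest G)
    {F : ℝ → ℝ} (hF : IntegrableOn F 𝕀) : ∫ u in 𝕀, F u * truncLap γ ε G u =
      -(cGamma γ / 2) * ∫ p, increment G p * increment F p * truncKernel γ ε (p.2 - p.1)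
        ∂(volume.restrict 𝕀).prod (volume.restrict 𝕀) := by
  set P : Measure ℝ := volume.restrict 𝕀
  obtain ⟨M, hM⟩ := hG.hasCompactSupport.exists_bound_of_continuous hG.1.continuous
  have hGm := hG.1.continuous.measurable
  have hkm := measurable_truncKernel γ ε
  have hint : Integrable
      (fun p : ℝ × ℝ => F p.1 * ((G p.2 - G p.1) * truncKernel γ ε (p.2 - p.1))) (P.prod P) := by
    refine Integrable.mul_bdd (c := (M + M) * ε ^ (-(1 + γ))) (hF.comp_fst P)
      (by fun_prop) (Eventually.of_forall fun p => ?_)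
    rw [norm_mul, Real.norm_of_nonneg (truncKernel_nonneg γ ε _)]
    exact mul_le_mul ((norm_sub_le _ _).trans (add_le_add (hM _) (hM _)))
      (truncKernel_le_rpow hγ hε _) (truncKernel_nonneg γ ε _)
      (add_nonneg ((norm_nonneg _).trans (hM 0)) ((norm_nonneg _).trans (hM 0)))
  have hsymm := integral_mul_integral_sub_mul_eq
    (fun p => by rw [← (even_truncKernel γ ε) (p.2 - p.1), neg_sub]; rfl) hint
  calc ∫ u, F u * truncLap γ ε G u ∂P
      = cGamma γ * ∫ u, F u * ∫ v, (G v - G u) * truncKernel γ ε (v - u) ∂P ∂P := by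
        simp_rw [← integral_const_mul (cGamma γ), truncLap, P, mul_left_comm]
    _ = _ := by
        rw [hsymm]
        simp only [increment_apply]
        ring

theorem inner_nonlocalGrad (F G : energySpace γ) : inner ℝ (nonlocalGrad γ G) (nonlocalGrad γ F) =
    ∫ p, increment G p * increment F p ∂unitGagliardoMeasure γ := by
  rw [L2.inner_def]
  refine integral_congr_ae ?_
  filter_upwards [coeFn_nonlocalGrad F, coeFn_nonlocalGrad G] with p hFp hGp
  rw [hFp, hGp, Real.inner_apply]

theorem integrable_increment_mul_increment (F G : energySpace γ) :
    Integrable (fun p => increment G p * increment F p * |p.1 - p.2| ^ (-(1 + γ)))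
      ((volume.restrict 𝕀).prod (volume.restrict 𝕀)) := by
  have h : Integrable (fun p => increment G p * increment F p) (unitGagliardoMeasure γ) :=
    (mem_energySpace_iff.1 G.2).integrable_mul (mem_energySpace_iff.1 F.2)
  rw [unitGagliardoMeasure_eq_withDensity, integrable_withDensity_iff (by fun_prop)
    (Eventually.of_forall fun _ => ENNReal.ofReal_lt_top)] at h
  refine h.congr (Eventually.of_forall fun p => ?_)
  simp only [ENNReal.toReal_ofReal (Real.rpow_nonneg (abs_nonneg _) _)]

theorem inner_nonlocalGrad_eq_integral_prod (F G : energySpace γ) :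
    inner ℝ (nonlocalGrad γ G) (nonlocalGrad γ F) =
      ∫ p, increment G p * increment F p * |p.1 - p.2| ^ (-(1 + γ))
        ∂(volume.restrict 𝕀).prod (volume.restrict 𝕀) := by
  rw [inner_nonlocalGrad, unitGagliardoMeasure_eq_withDensity,
    integral_withDensity_eq_integral_toReal_smul (by fun_prop)
      (Eventually.of_forall fun _ => ENNReal.ofReal_lt_top)]
  refine integral_congr_ae (Eventually.of_forall fun p => ?_)
  simp only [ENNReal.toReal_ofReal (Real.rpow_nonneg (abs_nonneg _) _), smul_eq_mul, mul_comm]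

theorem tendsto_integral_increment_mul_truncKernel (F G : energySpace γ)
    (hF : Measurable (F : ℝ → ℝ)) (hG : Measurable (G : ℝ → ℝ)) :
    Tendsto (fun ε => ∫ p, increment G p * increment F p * truncKernel γ ε (p.2 - p.1)
        ∂(volume.restrict 𝕀).prod (volume.restrict 𝕀)) (𝓝[>] 0)
      (𝓝 (inner ℝ (nonlocalGrad γ G) (nonlocalGrad γ F))) := by
  have hFi := measurable_increment hF
  have hGi := measurable_increment hG
  have hkm := measurable_truncKernel γ
  rw [inner_nonlocalGrad_eq_integral_prod]
  refine tendsto_integral_filter_of_dominated_convergence _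
    (Eventually.of_forall fun ε => Measurable.aestronglyMeasurable (by fun_prop))
    (Eventually.of_forall fun ε => Eventually.of_forall fun p => ?_)
    (integrable_increment_mul_increment F G).norm (Eventually.of_forall fun p => ?_)
  · rw [norm_mul, norm_mul (increment G p * _), Real.norm_of_nonneg (truncKernel_nonneg γ ε _),
      Real.norm_of_nonneg (Real.rpow_nonneg (abs_nonneg _) _), abs_sub_comm]
    exact mul_le_mul_of_nonneg_left (truncKernel_le_abs_rpow γ ε _) (norm_nonneg _)
  · rcases eq_or_ne p.1 p.2 with h | h
    · simp [increment_apply, h]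
    · rw [abs_sub_comm]
      exact (tendsto_truncKernel γ (sub_ne_zero.2 h.symm)).const_mul _

theorem measurable_truncLap (γ ε : ℝ) (hG : Measurable G) : Measurable (truncLap γ ε G) := by
  have hk := measurable_truncKernel γ ε
  have h : StronglyMeasurable fun p : ℝ × ℝ => (G p.2 - G p.1) * truncKernel γ ε (p.2 - p.1) :=
    Measurable.stronglyMeasurable (by fun_prop)
  exact h.integral_prod_right'.measurable.const_mul _

theorem IsSpatialTest.tendsto_integral_mul_truncLap (hγ : γ ∈ Ioo 0 2) (hG : IsSpatialTest G)
    {F : ℝ → ℝ} (hF : IntegrableOn F 𝕀) :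
    Tendsto (fun ε => ∫ u in 𝕀, F u * truncLap γ ε G u) (𝓝[>] 0)
      (𝓝 (∫ u in 𝕀, F u * fracLap γ G u)) := by
  obtain ⟨B, hB⟩ := hG.exists_abs_truncLap_le hγ
  refine tendsto_integral_filter_of_dominated_convergence (fun u => ‖F u‖ * B)
    (Eventually.of_forall fun ε => ?_) ?_ (hF.norm.mul_const B)
    (Eventually.of_forall fun u => (hG.tendsto_truncLap hγ u).const_mul _)
  · exact hF.1.mul (measurable_truncLap γ ε hG.1.continuous.measurable).aestronglyMeasurable
  · filter_upwards [self_mem_nhdsWithin] with ε hε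
    filter_upwards [ae_restrict_mem measurableSet_Icc] with u hu
    rw [norm_mul]
    gcongr
    exact hB ε hε u hu

theorem IsSpatialTest.integral_mul_fracLap (hγ : γ ∈ Ioo 0 2) (F G : energySpace γ)
    (hG : IsSpatialTest G) (hF : Measurable (F : ℝ → ℝ)) (hFint : IntegrableOn (F : ℝ → ℝ) 𝕀) :
    ∫ u in 𝕀, F.1 u * fracLap γ G u =
      -(cGamma γ / 2) * inner ℝ (nonlocalGrad γ G) (nonlocalGrad γ F) := by
  refine tendsto_nhds_unique (hG.tendsto_integral_mul_truncLap hγ hFint) ?_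
  refine ((tendsto_integral_increment_mul_truncKernel F G hF
    hG.1.continuous.measurable).const_mul _).congr' ?_
  filter_upwards [self_mem_nhdsWithin] with ε hε
  exact (hG.integral_mul_truncLap (by linarith [hγ.1]) hε hFint).symm

end FractionalLaplacian

/-! ### Weak solutions -/

section StationarySolution

variable {γ a b : ℝ} {F G : ℝ → ℝ}

theorem isStationarySolution_iff (hγ : γ ∈ Ioo 0 2) :
    IsStationarySolution γ a b F ↔ Measurable F ∧ HasBoundaryValues F a b ∧
      ∃ hF : F ∈ energySpace γ, nonlocalGrad γ ⟨F, hF⟩ ∈ (zeroTraceGrad γ)ᗮ := by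
  have hweak : ∀ (hF : F ∈ energySpace γ) (G : energySpace γ), IsSpatialTest G → Measurable F →
      HasBoundaryValues F a b → (∫ u in 𝕀, F u * fracLap γ G u = 0 ↔
        inner ℝ (nonlocalGrad γ G) (nonlocalGrad γ ⟨F, hF⟩) = 0) := fun hF G hG hm hbv => by
    rw [hG.integral_mul_fracLap hγ ⟨F, hF⟩ G hm (memLp_one_iff_integrable.1 (hbv.memLp 1))]
    simp [(cGamma_pos hγ.1).ne']
  rw [IsStationarySolution, memHgamma_iff hγ.1]
  constructor
  · rintro ⟨⟨hm, -, hF⟩, hbv, h⟩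
    exact ⟨hm, hbv, hF, (mem_orthogonal_zeroTraceGrad_iff hγ).2 fun G hG =>
      (hweak hF G hG hm hbv).1 (h G hG)⟩
  · rintro ⟨hm, hbv, hF, h⟩
    exact ⟨⟨hm, hbv.memLp 2, hF⟩, hbv, fun G hG =>
      (hweak hF ⟨G, hG.mem_energySpace hγ.2⟩ hG hm hbv).2
        ((mem_orthogonal_zeroTraceGrad_iff hγ).1 h _ hG)⟩

theorem exists_isStationarySolution (hγ : γ ∈ Ioo 1 2) (a b : ℝ) :
    ∃ F, IsStationarySolution γ a b F := by
  have hlip : LipschitzWith ‖b - a‖₊ fun u : ℝ => a + (b - a) * u := by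
    refine LipschitzWith.of_dist_le_mul fun x y => ?_
    rw [dist_add_left, ← smul_eq_mul, ← smul_eq_mul, dist_smul₀, coe_nnnorm]
  set A : energySpace γ := ⟨_, mem_energySpace_of_lipschitzWith hγ.2 hlip⟩
  have : CompleteSpace (zeroTraceGrad γ) := (isClosed_zeroTraceGrad hγ.1).completeSpace_coe
  obtain ⟨_, hf, g, hg, hsum⟩ :=
    (zeroTraceGrad γ).exists_add_mem_mem_orthogonal (nonlocalGrad γ A)
  obtain ⟨w, hw, hw₀, rfl⟩ := mem_zeroTraceGrad_iff.1 hf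
  have hgrad : nonlocalGrad γ (A - w) = g := by rw [map_sub, hsum, add_sub_cancel_left]
  refine ⟨A - w, (isStationarySolution_iff ⟨by linarith [hγ.1], hγ.2⟩).2
    ⟨hlip.continuous.measurable.sub hw.measurable, ?_, (A - w).2, hgrad ▸ hg⟩⟩
  have hAw : Continuous (A - w : ℝ → ℝ) := hlip.continuous.sub hw
  simpa [A, hw₀] using hasBoundaryValues_of_continuous hAw

theorem IsStationarySolution.ae_eq_of_norm_nonlocalGrad_le (hγ : γ ∈ Ioo 1 2)
    (h : IsStationarySolution γ a b F) (hF : F ∈ energySpace γ) (hG : G ∈ energySpace γ)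
    (hbv : HasBoundaryValues G a b)
    (hle : ‖nonlocalGrad γ ⟨G, hG⟩‖ ≤ ‖nonlocalGrad γ ⟨F, hF⟩‖) :
    G =ᵐ[volume.restrict 𝕀] F := by
  obtain ⟨-, hFbv, _, horth⟩ := (isStationarySolution_iff ⟨by linarith [hγ.1], hγ.2⟩).1 h
  set D : energySpace γ := ⟨G, hG⟩ - ⟨F, hF⟩
  have hD : D ∈ zeroTrace γ := mem_zeroTrace_iff.2 (by simpa [D] using hbv.sub hFbv)
  have hinner : inner ℝ (nonlocalGrad γ D) (nonlocalGrad γ ⟨F, hF⟩) = 0 :=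
    Submodule.inner_right_of_mem_orthogonal (Submodule.mem_map_of_mem hD) horth
  have hpyth : ‖nonlocalGrad γ ⟨G, hG⟩‖ * ‖nonlocalGrad γ ⟨G, hG⟩‖ =
      ‖nonlocalGrad γ D‖ * ‖nonlocalGrad γ D‖ +
        ‖nonlocalGrad γ ⟨F, hF⟩‖ * ‖nonlocalGrad γ ⟨F, hF⟩‖ := by
    rw [← norm_add_sq_eq_norm_sq_add_norm_sq_of_inner_eq_zero _ _ hinner, ← map_add,
      sub_add_cancel]
  have hgrad : nonlocalGrad γ D = 0 := by
    refine norm_eq_zero.1 (mul_self_eq_zero.1 ((mul_self_nonneg _).antisymm' ?_))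
    linarith [mul_self_le_mul_self (norm_nonneg _) hle]
  filter_upwards [ae_eq_zero_of_nonlocalGrad_eq_zero hγ.1 hD hgrad] with u hu using sub_eq_zero.1 hu

theorem IsStationarySolution.ae_eq (hγ : γ ∈ Ioo 1 2) (hF : IsStationarySolution γ a b F)
    (hG : IsStationarySolution γ a b G) : F =ᵐ[volume.restrict 𝕀] G := by
  have hγ0 : 0 < γ := by linarith [hγ.1]
  have hFe := ((memHgamma_iff hγ0).1 hF.1).2.2
  have hGe := ((memHgamma_iff hγ0).1 hG.1).2.2
  rcases le_total ‖nonlocalGrad γ ⟨F, hFe⟩‖ ‖nonlocalGrad γ ⟨G, hGe⟩‖ with hle | hle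
  · exact hG.ae_eq_of_norm_nonlocalGrad_le hγ hGe hFe hF.2.1 hle
  · exact (hF.ae_eq_of_norm_nonlocalGrad_le hγ hFe hGe hG.2.1 hle).symm

/-- Clamping to the range of the boundary values keeps them and does not increase the energy. -/
theorem IsStationarySolution.clamp_ae_eq (hγ : γ ∈ Ioo 1 2) (h : IsStationarySolution γ a b F) :
    (fun u => max (min a b) (min (max a b) (F u))) =ᵐ[volume.restrict 𝕀] F := by
  obtain ⟨hm, -, hF⟩ := (memHgamma_iff (by linarith [hγ.1])).1 h.1
  have hφ : LipschitzWith 1 fun x => max (min a b) (min (max a b) x) :=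
    (LipschitzWith.id.const_min _).const_max _
  have hφF := comp_mem_energySpace hφ hm hF
  refine h.ae_eq_of_norm_nonlocalGrad_le hγ hF hφF ?_ (norm_nonlocalGrad_comp_le hφ hF hφF)
  simpa using! h.2.1.comp hφ.continuous

theorem IsStationarySolution.mem_Icc (hγ : γ ∈ Ioo 1 2) (h : IsStationarySolution γ a b F)
    (hG : ContinuousOn G 𝕀) (hFG : F =ᵐ[volume.restrict 𝕀] G) {u : ℝ} (hu : u ∈ 𝕀) :
    G u ∈ Icc (min a b) (max a b) := by
  have hclamp : (fun u => max (min a b) (min (max a b) (G u))) =ᵐ[volume.restrict 𝕀] G := by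
    filter_upwards [h.clamp_ae_eq hγ, hFG] with v hv hFGv
    rw [← hFGv, hv]
  have heq : EqOn (fun u => max (min a b) (min (max a b) (G u))) G 𝕀 :=
    Measure.eqOn_Icc_of_ae_eq volume (zero_ne_one' ℝ) hclamp (by fun_prop) hG
  rw [← heq hu]
  exact ⟨le_max_left _ _, max_le min_le_max (min_le_left _ _)⟩

end StationarySolution

end

/-- Existence and a.e. uniqueness of the weak solution of the stationary
fractional Dirichlet problem, together with the maximum principle for its continuous
representative. -/
theorem stationary_solution_exists_unique_max_principle
    (γ Φl Φr : ℝ) (hγ : γ ∈ Set.Ioo (1:ℝ) 2) :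
    ∃ Φss : ℝ → ℝ, IsStationarySolution γ Φl Φr Φss ∧
      (∀ Ψ : ℝ → ℝ, IsStationarySolution γ Φl Φr Ψ →
        ∀ᵐ u ∂(volume.restrict (Set.Icc (0:ℝ) 1)), Ψ u = Φss u) ∧
      (∀ Φc : ℝ → ℝ, ContinuousOn Φc (Set.Icc 0 1) →
        (∀ᵐ u ∂(volume.restrict (Set.Icc (0:ℝ) 1)), Φss u = Φc u) →
        ∀ u ∈ Set.Icc (0:ℝ) 1, min Φl Φr ≤ Φc u ∧ Φc u ≤ max Φl Φr) := by
  obtain ⟨Φ, hΦ⟩ := exists_isStationarySolution hγ Φl Φr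
  exact ⟨Φ, hΦ, fun Ψ hΨ => hΨ.ae_eq hγ hΦ, fun Φc hcont hae u hu =>
    hΦ.mem_Icc hγ hcont hae hu⟩
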